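/- For every K ∈ T^d, the discrete spectrum of H(K) is characterized as σ_disc(H(K)) = {z ∈ ℂ \ Σ_K : I − T(K, z) is not injective}, i.e. a point z outside Σ_K belongs to σ(H(K)) if and only if the compact operator T(K, z) has eigenvalue 1. -/

import Mathlib

open MeasureTheory Complex Filter Topology Set

noncomputable section

instance fact2pi : Fact (0 < 2 * Real.pi) := ⟨by positivity⟩

/-- The d-dimensional torus `(-π, π]^d` with its Haar (Lebesgue) measure. -/
abbrev Td (d : ℕ) : Type := Fin d → AddCircle (2 * Real.pi)

/-- The Hilbert space `L²(T^d)`. -/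
abbrev L2 (d : ℕ) := Lp ℂ 2 (volume : Measure (Td d))

/-- The Hilbert space `L²((T^d)²)`. -/
abbrev L2two (d : ℕ) := Lp ℂ 2 (volume : Measure (Td d × Td d))

/-- The swap map on `L²((T^d)²)`, `(S f)(p,q) = f(q,p)`. -/
def swapL (d : ℕ) : L2two d →ₗ[ℂ] L2two d :=
  Lp.compMeasurePreservingₗ ℂ Prod.swap MeasureTheory.Measure.measurePreserving_swap

/-- The subspace `L²_sym((T^d)²)` of symmetric functions, as the fixed-point space of swap. -/
def symSub (d : ℕ) : Submodule ℂ (L2two d) := LinearMap.ker (swapL d - LinearMap.id)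

abbrev L2sym (d : ℕ) := ↥(symSub d)

instance (d : ℕ) : CompleteSpace (L2sym d) := by
  have hiso : Isometry (swapL d) :=
    Lp.isometry_compMeasurePreserving MeasureTheory.Measure.measurePreserving_swap
  have hcl : IsClosed ((symSub d : Set (L2two d))) := by
    have h1 : (symSub d : Set (L2two d)) = {f | swapL d f = f} := by
      ext f
      simp [symSub, LinearMap.mem_ker, sub_eq_zero, LinearMap.sub_apply]
    rw [h1]
    exact isClosed_eq hiso.continuous continuous_id
  exact hcl.completeSpace_coe

/-- The Hilbert space `ℂ ⊕ L²(T^d)`. -/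
abbrev Hkk (d : ℕ) := WithLp 2 (ℂ × L2 d)

/-- The zero-particle component of an element of `ℂ ⊕ L²(T^d)`. -/
def pk1 {d : ℕ} (f : Hkk d) : ℂ := (WithLp.equiv 2 (ℂ × L2 d) f).1

/-- The one-particle component of an element of `ℂ ⊕ L²(T^d)`. -/
def pk2 {d : ℕ} (f : Hkk d) : L2 d := (WithLp.equiv 2 (ℂ × L2 d) f).2

/-- The Hilbert space `H = ℂ ⊕ L²(T^d) ⊕ L²_sym((T^d)²)`. -/
abbrev H3 (d : ℕ) := WithLp 2 (ℂ × WithLp 2 (L2 d × L2sym d))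

/-- The zero-particle component. -/
def p0 {d : ℕ} (f : H3 d) : ℂ := (WithLp.equiv 2 _ f).1

/-- The one-particle component. -/
def p1 {d : ℕ} (f : H3 d) : L2 d := (WithLp.equiv 2 _ ((WithLp.equiv 2 _ f).2)).1

/-- The two-particle component, as an element of `L²((T^d)²)`. -/
def p2 {d : ℕ} (f : H3 d) : L2two d :=
  ((WithLp.equiv 2 _ ((WithLp.equiv 2 _ f).2)).2 : L2sym d)

/-- The essential spectrum of a bounded operator on a Hilbert space, via the Weyl criterion:
`λ ∈ σ_ess(A)` iff there is an orthonormal (singular) sequence `u` with `‖(A - λ)uₙ‖ → 0`. -/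
def essSpec {H' : Type*} [NormedAddCommGroup H'] [InnerProductSpace ℂ H']
    (A : H' →L[ℂ] H') : Set ℂ :=
  {l | ∃ u : ℕ → H', Orthonormal ℂ u ∧
        Tendsto (fun n => ‖A (u n) - l • u n‖) atTop (𝓝 0)}

variable {d : ℕ}

/-- `E_min(K,k) = min_q w₂(K; k, q)`. -/
def Emin (w₂ : Td d → Td d → Td d → ℝ) (K k : Td d) : ℝ := ⨅ q, w₂ K k q

/-- `E_max(K,k) = max_q w₂(K; k, q)`. -/
def Emax (w₂ : Td d → Td d → Td d → ℝ) (K k : Td d) : ℝ := ⨆ q, w₂ K k q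

/-- `m_K = min_{p,q} w₂(K; p, q)`. -/
def mK (w₂ : Td d → Td d → Td d → ℝ) (K : Td d) : ℝ := ⨅ x : Td d × Td d, w₂ K x.1 x.2

/-- `M_K = max_{p,q} w₂(K; p, q)`. -/
def MK (w₂ : Td d → Td d → Td d → ℝ) (K : Td d) : ℝ := ⨆ x : Td d × Td d, w₂ K x.1 x.2

/-- The Fredholm determinant
`Δ_K(k; z) = w₁(K,k) − z − (1/2) ∫ v₁(t)² / (w₂(K;k,t) − z) dt`. -/
def Delta (v₁ : Td d → ℝ) (w₁ : Td d → Td d → ℝ) (w₂ : Td d → Td d → Td d → ℝ)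
    (K k : Td d) (z : ℂ) : ℂ :=
  (w₁ K k : ℂ) - z - (1 / 2) * ∫ t, (v₁ t : ℂ) ^ 2 / ((w₂ K k t : ℂ) - z)

/-- The interval `[E_min(K,k), E_max(K,k)]`, viewed inside `ℂ`. -/
def bandKk (w₂ : Td d → Td d → Td d → ℝ) (K k : Td d) : Set ℂ :=
  Complex.ofReal '' Set.Icc (Emin w₂ K k) (Emax w₂ K k)

/-- The interval `[m_K, M_K]`, viewed inside `ℂ`. -/
def bigBand (w₂ : Td d → Td d → Td d → ℝ) (K : Td d) : Set ℂ :=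
  Complex.ofReal '' Set.Icc (mK w₂ K) (MK w₂ K)

/-- The two-particle branch
`Λ_K = {z : ∃ k, z ∉ [E_min(K,k), E_max(K,k)] ∧ Δ_K(k; z) = 0}`. -/
def LamK (v₁ : Td d → ℝ) (w₁ : Td d → Td d → ℝ) (w₂ : Td d → Td d → Td d → ℝ)
    (K : Td d) : Set ℂ :=
  {z | ∃ k, z ∉ bandKk w₂ K k ∧ Delta v₁ w₁ w₂ K k z = 0}

/-- `Σ_K = [m_K, M_K] ∪ Λ_K`. -/
def SigK (v₁ : Td d → ℝ) (w₁ : Td d → Td d → ℝ) (w₂ : Td d → Td d → Td d → ℝ)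
    (K : Td d) : Set ℂ :=
  bigBand w₂ K ∪ LamK v₁ w₁ w₂ K

/-- The defining equations of the `3×3` operator matrix `H(K)` acting on
`ℂ ⊕ L²(T^d) ⊕ L²_sym((T^d)²)`:
`(H f)₀ = w₀(K) f₀ + ∫ v₀(t) f₁(t) dt`,
`(H f)₁(p) = v₀(p) f₀ + w₁(K; p) f₁(p) + ∫ v₁(t) f₂(p,t) dt`,
`(H f)₂(p,q) = (1/2)(v₁(p) f₁(q) + v₁(q) f₁(p)) + w₂(K; p,q) f₂(p,q)`. -/
def IsHamiltonian {d : ℕ} (w₀ v₀ v₁ : Td d → ℝ) (w₁ : Td d → Td d → ℝ)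
    (w₂ : Td d → Td d → Td d → ℝ) (K : Td d) (H : H3 d →L[ℂ] H3 d) : Prop :=
  ∀ f : H3 d,
    (p0 (H f) = (w₀ K : ℂ) * p0 f + (∫ t, (v₀ t : ℂ) * (p1 f) t)) ∧
    (⇑(p1 (H f)) =ᵐ[volume] fun p =>
        (v₀ p : ℂ) * p0 f + (w₁ K p : ℂ) * (p1 f) p +
          (∫ t, (v₁ t : ℂ) * (p2 f) (p, t))) ∧
    (⇑(p2 (H f)) =ᵐ[volume] fun x : Td d × Td d =>
        ((v₁ x.1 : ℂ) * (p1 f) x.2 + (v₁ x.2 : ℂ) * (p1 f) x.1) / 2 +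
          (w₂ K x.1 x.2 : ℂ) * (p2 f) x)

/-- The defining equations of the `2×2` block operator matrix `T(K, z)` acting on
`ℂ ⊕ L²(T^d)`:
`(T g)₀ = (1 + w₀(K) − z) g₀ + ∫ v₀(t) g₁(t) dt`,
`(T g)₁(p) = −v₀(p) g₀ / Δ_K(p; z) + (v₁(p)/(2Δ_K(p; z))) ∫ v₁(t) g₁(t)/(w₂(K;p,t) − z) dt`. -/
def IsTOp {d : ℕ} (w₀ v₀ v₁ : Td d → ℝ) (w₁ : Td d → Td d → ℝ)
    (w₂ : Td d → Td d → Td d → ℝ) (K : Td d) (z : ℂ) (T : Hkk d →L[ℂ] Hkk d) : Prop :=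
  ∀ g : Hkk d,
    (pk1 (T g) = (1 + (w₀ K : ℂ) - z) * pk1 g + (∫ t, (v₀ t : ℂ) * (pk2 g) t)) ∧
    (⇑(pk2 (T g)) =ᵐ[volume] fun p =>
        -((v₀ p : ℂ) * pk1 g) / Delta v₁ w₁ w₂ K p z +
          (v₁ p : ℂ) / (2 * Delta v₁ w₁ w₂ K p z) *
            (∫ t, (v₁ t : ℂ) * (pk2 g) t / ((w₂ K p t : ℂ) - z)))


open MeasureTheory Complex Filter Topology Set

noncomputable section
theorem exists_bddBelow_of_notMem_essSpec {H' : Type*} [NormedAddCommGroup H']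
    [InnerProductSpace ℂ H'] (A : H' →L[ℂ] H') (z : ℂ) (hz : z ∉ essSpec A) :
    ∃ F : Submodule ℂ H', FiniteDimensional ℂ F ∧ ∃ c > 0, ∀ u ∈ Fᗮ, c * ‖u‖ ≤ ‖A u - z • u‖ := by
  by_contra! hcon
  apply hz
  have key := exists_seq_of_forall_finset_exists
    (fun x : ℕ × H' => ‖x.2‖ = 1 ∧ ‖A x.2 - z • x.2‖ < 1 / ((x.1 : ℝ) + 1))
    (fun x y => x.1 < y.1 ∧ inner ℂ x.2 y.2 = 0) (by
      intro s _
      let N := s.sup (fun x => x.1) + 1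
      let F : Submodule ℂ H' := Submodule.span ℂ ((fun x : ℕ × H' => x.2) '' (s : Set (ℕ × H')))
      have hF : FiniteDimensional ℂ F :=
        FiniteDimensional.span_of_finite ℂ (s.finite_toSet.image _)
      obtain ⟨u, hu, hlt⟩ := hcon F hF (1 / ((N : ℝ) + 1)) (by positivity)
      have hu0 : ‖u‖ ≠ 0 := by
        intro h
        rw [norm_eq_zero] at h
        simp [h] at hlt
      have hpos : 0 < ‖u‖ := lt_of_le_of_ne (norm_nonneg _) (Ne.symm hu0)
      refine ⟨(N, ((‖u‖⁻¹ : ℝ) : ℂ) • u), ⟨?_, ?_⟩, ?_⟩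
      · simp [norm_smul, hu0]
      · have : A (((‖u‖⁻¹ : ℝ) : ℂ) • u) - z • (((‖u‖⁻¹ : ℝ) : ℂ) • u)
            = ((‖u‖⁻¹ : ℝ) : ℂ) • (A u - z • u) := by
          rw [map_smul, smul_sub, smul_comm]
        simp only [this, norm_smul]
        rw [Complex.norm_real, Real.norm_of_nonneg (by positivity), inv_mul_lt_iff₀ hpos,
          mul_comm]
        exact hlt
      · intro x hx
        refine ⟨Nat.lt_succ_of_le (Finset.le_sup (f := fun x : ℕ × H' => x.1) hx), ?_⟩
        have : inner ℂ x.2 u = 0 :=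
          (Submodule.mem_orthogonal _ _).1 hu _ (Submodule.subset_span ⟨x, hx, rfl⟩)
        simp only [inner_smul_right, this, mul_zero])
  obtain ⟨f, hP, hr⟩ := key
  refine ⟨fun n => (f n).2, ⟨fun n => (hP n).1, ?_⟩, ?_⟩
  · intro i j hij
    rcases lt_or_gt_of_ne hij with h | h
    · exact (hr i j h).2
    · exact inner_eq_zero_symm.1 (hr j i h).2
  · have hmono : StrictMono (fun n => (f n).1) := fun i j h => (hr i j h).1
    refine squeeze_zero (fun _ => norm_nonneg _) (fun n => ?_)
      tendsto_one_div_add_atTop_nhds_zero_nat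
    refine (hP n).2.le.trans ?_
    have : (n : ℝ) ≤ ((f n).1 : ℝ) := by exact_mod_cast hmono.le_apply
    gcongr

theorem mem_essSpec_of_subspaces {H' : Type*} [NormedAddCommGroup H']
    [InnerProductSpace ℂ H'] (A : H' →L[ℂ] H') (z : ℂ)
    (h : ∀ ε > 0, ∃ S : Submodule ℂ H', ¬ FiniteDimensional ℂ S ∧
      ∀ u ∈ S, ‖A u - z • u‖ ≤ ε * ‖u‖) : z ∈ essSpec A := by
  by_contra hz
  obtain ⟨F, hF, c, hc, hb⟩ := exists_bddBelow_of_notMem_essSpec A z hz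
  obtain ⟨S, hS, hSb⟩ := h (c / 2) (by positivity)
  apply hS
  let P : S →ₗ[ℂ] F := (F.orthogonalProjection : H' →ₗ[ℂ] F) ∘ₗ S.subtype
  refine FiniteDimensional.of_injective P ?_
  rw [← LinearMap.ker_eq_bot, LinearMap.ker_eq_bot']
  intro m hm
  have h1 : (m : H') ∈ Fᗮ := by
    rw [← Submodule.orthogonalProjection_eq_zero_iff]
    exact hm
  have h2 := hb _ h1
  have h3 := hSb _ m.2
  have : ‖(m : H')‖ ≤ 0 := by nlinarith
  exact_mod_cast norm_le_zero_iff.1 this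

theorem exists_eigenvector_of_selfAdjoint {H' : Type*} [NormedAddCommGroup H']
    [InnerProductSpace ℂ H'] [CompleteSpace H'] (A : H' →L[ℂ] H') (hA : IsSelfAdjoint A) (z : ℂ)
    (hz : z ∉ essSpec A) (hs : z ∈ spectrum ℂ A) : ∃ u, u ≠ 0 ∧ A u = z • u := by
  by_contra! hcon
  obtain ⟨F, hF, c, hc, hb⟩ := exists_bddBelow_of_notMem_essSpec A z hz
  have hzr : (starRingEnd ℂ) z = z := by
    have := hA.mem_spectrum_eq_re hs
    rw [this]; simp
  let B : H' →L[ℂ] H' := algebraMap ℂ _ z - A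
  have hBapp : ∀ u, B u = z • u - A u := fun u => by
    simp [B, Algebra.algebraMap_eq_smul_one]
  have hBsa : ∀ u v, inner ℂ (B u) v = inner ℂ u (B v) := by
    intro u v
    have h1 : inner ℂ (A u) v = inner ℂ u (A v) := hA.isSymmetric u v
    rw [hBapp, hBapp, inner_sub_left, inner_sub_right, h1, inner_smul_left, inner_smul_right, hzr]
  have hinj : Function.Injective B := by
    rw [injective_iff_map_eq_zero]
    intro u hu
    by_contra h0
    apply hcon u h0
    rw [hBapp, sub_eq_zero] at hu
    exact hu.symm
  have hcl : IsClosed (Fᗮ.map (B : H' →ₗ[ℂ] H') : Set H') := by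
    let g : Fᗮ →L[ℂ] H' := B.comp Fᗮ.subtypeL
    have hanti : AntilipschitzWith (Real.toNNReal c⁻¹) g := by
      refine AddMonoidHomClass.antilipschitz_of_bound g ?_
      intro x
      have := hb x x.2
      rw [Real.coe_toNNReal _ (by positivity)]
      have h2 : ‖g x‖ = ‖A (x : H') - z • (x : H')‖ := by
        change ‖B x‖ = _
        rw [hBapp, norm_sub_rev]
      rw [h2, inv_mul_eq_div, le_div_iff₀ hc, mul_comm]
      exact this
    have := hanti.isClosed_range g.uniformContinuous
    convert this using 1
    ext y
    simp [g]
  have hclr : IsClosed ((LinearMap.range (B : H' →ₗ[ℂ] H') : Submodule ℂ H') : Set H') := by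
    rw [← Submodule.map_top, ← Submodule.sup_orthogonal_of_hasOrthogonalProjection (K := F),
      Submodule.map_sup, sup_comm]
    exact Submodule.isClosed_sup_finiteDimensional _ _ hcl
  have hsurj : Function.Surjective B := by
    have : CompleteSpace (LinearMap.range (B : H' →ₗ[ℂ] H')) := hclr.completeSpace_coe
    have htop : LinearMap.range (B : H' →ₗ[ℂ] H') = ⊤ := by
      rw [← Submodule.orthogonal_eq_bot_iff, Submodule.eq_bot_iff]
      intro x hx
      apply hinj
      rw [map_zero, ← inner_self_eq_zero (𝕜 := ℂ), ← hBsa]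
      exact (Submodule.mem_orthogonal _ _).1 hx _ ⟨B x, rfl⟩
    exact LinearMap.range_eq_top.1 htop
  exact hs (ContinuousLinearMap.isUnit_iff_bijective.2 ⟨hinj, hsurj⟩)
end

open MeasureTheory Complex Filter Topology Set

noncomputable section

section structural
variable {d : ℕ}

theorem p0_add (f g : H3 d) : p0 (f + g) = p0 f + p0 g := rfl
theorem p1_add (f g : H3 d) : p1 (f + g) = p1 f + p1 g := rfl
theorem p2_add (f g : H3 d) : p2 (f + g) = p2 f + p2 g := rfl
theorem p0_sub (f g : H3 d) : p0 (f - g) = p0 f - p0 g := rfl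
theorem p1_sub (f g : H3 d) : p1 (f - g) = p1 f - p1 g := rfl
theorem p2_sub (f g : H3 d) : p2 (f - g) = p2 f - p2 g := rfl
theorem p0_smul (c : ℂ) (f : H3 d) : p0 (c • f) = c * p0 f := rfl
theorem p1_smul (c : ℂ) (f : H3 d) : p1 (c • f) = c • p1 f := rfl
theorem p2_smul (c : ℂ) (f : H3 d) : p2 (c • f) = c • p2 f := rfl
theorem p0_zero : p0 (0 : H3 d) = 0 := rfl
theorem p1_zero : p1 (0 : H3 d) = 0 := rfl
theorem p2_zero : p2 (0 : H3 d) = 0 := rfl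

theorem H3_norm_sq (f : H3 d) : ‖f‖ ^ 2 = ‖p0 f‖ ^ 2 + ‖p1 f‖ ^ 2 + ‖p2 f‖ ^ 2 := by
  rw [WithLp.prod_norm_sq_eq_of_L2, WithLp.prod_norm_sq_eq_of_L2, ← add_assoc]
  rfl

theorem H3_inner (f g : H3 d) : inner ℂ f g
    = inner ℂ (p0 f) (p0 g) + inner ℂ (p1 f) (p1 g) + inner ℂ (p2 f) (p2 g) := by
  rw [WithLp.prod_inner_apply, WithLp.prod_inner_apply, ← add_assoc]
  rfl

theorem H3_ext {f g : H3 d} (h0 : p0 f = p0 g) (h1 : p1 f = p1 g) (h2 : p2 f = p2 g) : f = g := by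
  rw [← sub_eq_zero, ← norm_eq_zero, ← sq_eq_zero_iff, H3_norm_sq, p0_sub, p1_sub, p2_sub,
    h0, h1, h2]
  simp

theorem Hkk_ext {f g : Hkk d} (h0 : pk1 f = pk1 g) (h1 : pk2 f = pk2 g) : f = g := by
  apply (WithLp.equiv 2 _).injective
  exact Prod.ext h0 h1

theorem exists_Hkk (a : ℂ) (g : L2 d) : ∃ f : Hkk d, pk1 f = a ∧ pk2 f = g :=
  ⟨(WithLp.equiv 2 _).symm (a, g), rfl, rfl⟩

theorem mem_symSub_iff (F : L2two d) :
    F ∈ symSub d ↔ (fun x : Td d × Td d => F x.swap) =ᵐ[volume] F := by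
  have h1 : F ∈ symSub d ↔ swapL d F = F := by
    simp [symSub, LinearMap.mem_ker, sub_eq_zero, LinearMap.sub_apply]
  have h2 : ⇑(swapL d F) =ᵐ[volume] fun x : Td d × Td d => F x.swap :=
    Lp.coeFn_compMeasurePreserving F MeasureTheory.Measure.measurePreserving_swap
  rw [h1]
  constructor
  · intro h
    rw [h] at h2
    exact h2.symm
  · intro h
    exact Lp.ext (h2.trans h)

theorem p2_symm (f : H3 d) : (fun x : Td d × Td d => p2 f x.swap) =ᵐ[volume] p2 f :=
  (mem_symSub_iff _).1 ((WithLp.equiv 2 _ ((WithLp.equiv 2 _ f).2)).2 : L2sym d).2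

theorem exists_H3 (a : ℂ) (g : L2 d) (F : Td d × Td d → ℂ) (hF : MemLp F 2 volume)
    (hs : ∀ x, F x.swap = F x) :
    ∃ f : H3 d, p0 f = a ∧ p1 f = g ∧ p2 f =ᵐ[volume] F := by
  have hm : hF.toLp F ∈ symSub d := by
    rw [mem_symSub_iff]
    have h1 := hF.coeFn_toLp
    have h2 : (fun x : Td d × Td d => hF.toLp F x.swap) =ᵐ[volume] fun x => F x.swap :=
      (MeasureTheory.Measure.measurePreserving_swap (μ := (volume : Measure (Td d)))
        (ν := (volume : Measure (Td d)))).quasiMeasurePreserving.ae_eq_comp h1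
    filter_upwards [h1, h2] with x h1 h2
    rw [h1, h2, hs]
  refine ⟨(WithLp.equiv 2 _).symm (a, (WithLp.equiv 2 _).symm (g, ⟨hF.toLp F, hm⟩)), rfl, rfl, ?_⟩
  exact hF.coeFn_toLp

end structural

theorem enorm_sq_L2 {X : Type*} [MeasurableSpace X] {μ : Measure X} (f : Lp ℂ 2 μ) :
    ‖f‖ₑ ^ 2 = ∫⁻ x, ‖f x‖ₑ ^ 2 ∂μ := by
  rw [Lp.enorm_def, eLpNorm_eq_lintegral_rpow_enorm_toReal (by norm_num) (by norm_num)]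
  simp only [ENNReal.toReal_ofNat, ENNReal.rpow_ofNat]
  rw [← ENNReal.rpow_natCast, ← ENNReal.rpow_mul]
  norm_num

theorem CS_bound {X : Type*} [MeasurableSpace X] {μ : Measure X} (f h : X → ℂ)
    (hf : AEStronglyMeasurable f μ) (C : ENNReal) (O : Set X) (hO : MeasurableSet O)
    (hh : ∀ᵐ t ∂μ, ‖h t‖ₑ ≤ O.indicator (fun _ => C) t * ‖f t‖ₑ) :
    ‖∫ t, h t ∂μ‖ₑ ^ 2 ≤ C ^ 2 * μ O * ∫⁻ t, ‖f t‖ₑ ^ 2 ∂μ := by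
  have h1 : ‖∫ t, h t ∂μ‖ₑ ≤ ∫⁻ t, O.indicator (fun _ => C) t * ‖f t‖ₑ ∂μ :=
    (enorm_integral_le_lintegral_enorm _).trans (lintegral_mono_ae hh)
  have h2 := ENNReal.lintegral_mul_le_Lp_mul_Lq μ Real.HolderConjugate.two_two
    (f := O.indicator (fun _ => C)) (g := fun t => ‖f t‖ₑ)
    ((measurable_const.indicator hO).aemeasurable) hf.enorm
  have h3 := h1.trans h2
  have h4 : ∫⁻ a, O.indicator (fun _ => C) a ^ (2:ℝ) ∂μ = C ^ 2 * μ O := by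
    have : (fun a => O.indicator (fun _ => C) a ^ (2:ℝ)) = O.indicator (fun _ => C ^ 2) := by
      ext a
      by_cases ha : a ∈ O <;> simp [ha]
    rw [this, lintegral_indicator_const hO]
  rw [h4] at h3
  have h5 := pow_le_pow_left' h3 2
  rw [mul_pow, ← ENNReal.rpow_natCast, ← ENNReal.rpow_natCast (_ ^ _), ← ENNReal.rpow_natCast (_ ^ _),
    ← ENNReal.rpow_mul, ← ENNReal.rpow_mul] at h5
  simpa using h5

theorem sq_enorm_to_real {a b C : ℝ} {m : ENNReal} (hm : m ≠ ⊤) (ha : 0 ≤ a) (hb : 0 ≤ b)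
    (hC : 0 ≤ C) (h : ENNReal.ofReal a ^ 2 ≤ ENNReal.ofReal C ^ 2 * m * ENNReal.ofReal b ^ 2) :
    a ≤ C * √m.toReal * b := by
  rw [← ENNReal.ofReal_toReal hm, ← ENNReal.ofReal_pow ha, ← ENNReal.ofReal_pow hb,
    ← ENNReal.ofReal_pow hC, ← ENNReal.ofReal_mul (by positivity),
    ← ENNReal.ofReal_mul (by positivity), ENNReal.ofReal_le_ofReal_iff (by positivity)] at h
  apply le_of_sq_le_sq _ (by positivity)
  rw [mul_pow, mul_pow, Real.sq_sqrt (by positivity)]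
  exact h

variable {d : ℕ}

/-- Bound on a linear functional. -/
theorem functional_bound (f : L2 d) (k : Td d → ℂ) (C : ℝ) (hC : 0 ≤ C) (hk : ∀ t, ‖k t‖ ≤ C)
    (O : Set (Td d)) (hO : MeasurableSet O) (hf : ∀ᵐ t, t ∉ O → f t = 0) :
    ‖∫ t, k t * f t‖ ≤ C * √(volume O).toReal * ‖f‖ := by
  apply sq_enorm_to_real (measure_ne_top _ _) (norm_nonneg _) (norm_nonneg _) hC
  rw [ofReal_norm, ofReal_norm, enorm_sq_L2]
  apply CS_bound f _ (Lp.aestronglyMeasurable f) _ O hO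
  filter_upwards [hf] with t ht
  by_cases h : t ∈ O
  · rw [indicator_of_mem h, enorm_mul]
    gcongr
    rw [← ofReal_norm]
    exact ENNReal.ofReal_le_ofReal (hk t)
  · simp [ht h]

theorem partial_lintegral (F : L2two d) (k : Td d × Td d → ℂ) (C : ℝ)
    (hk : ∀ x, ‖k x‖ ≤ C) (O : Set (Td d)) (hO : MeasurableSet O)
    (hF : ∀ᵐ x : Td d × Td d, x.2 ∉ O → F x = 0) :
    ∫⁻ p, ‖∫ t, k (p, t) * F (p, t)‖ₑ ^ 2 ≤ ENNReal.ofReal C ^ 2 * volume O * ‖F‖ₑ ^ 2 := by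
  rw [enorm_sq_L2]
  have hFm : AEStronglyMeasurable F ((volume : Measure (Td d)).prod volume) :=
    Lp.aestronglyMeasurable F
  have hlint : ∫⁻ x, ‖F x‖ₑ ^ 2 = ∫⁻ p, ∫⁻ t, ‖F (p, t)‖ₑ ^ 2 :=
    lintegral_prod _ (hFm.enorm.pow_const 2)
  rw [hlint, ← lintegral_const_mul' _ _ (by
    exact ENNReal.mul_ne_top (by simp) (measure_ne_top _ _))]
  apply lintegral_mono_ae
  filter_upwards [Measure.ae_ae_of_ae_prod hF, hFm.prodMk_left] with p hz hm
  apply CS_bound (fun t => F (p, t)) _ hm _ O hO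
  filter_upwards [hz] with t ht
  by_cases h : t ∈ O
  · rw [indicator_of_mem h, enorm_mul]
    gcongr
    rw [← ofReal_norm]
    exact ENNReal.ofReal_le_ofReal (hk _)
  · simp [ht h]

/-- Bound on a partial integration. -/
theorem partial_bound (F : L2two d) (g : L2 d) (k : Td d × Td d → ℂ) (C : ℝ) (hC : 0 ≤ C)
    (hk : ∀ x, ‖k x‖ ≤ C) (O : Set (Td d)) (hO : MeasurableSet O)
    (hF : ∀ᵐ x : Td d × Td d, x.2 ∉ O → F x = 0)
    (hg : g =ᵐ[volume] fun p => ∫ t, k (p, t) * F (p, t)) :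
    ‖g‖ ≤ C * √(volume O).toReal * ‖F‖ := by
  apply sq_enorm_to_real (measure_ne_top _ _) (norm_nonneg _) (norm_nonneg _) hC
  rw [ofReal_norm, ofReal_norm, enorm_sq_L2 g]
  refine le_trans (le_of_eq ?_) (partial_lintegral F k C hk O hO hF)
  apply lintegral_congr_ae
  filter_upwards [hg] with p hp
  rw [hp]
end

open MeasureTheory Complex Filter Topology Set

noncomputable section

theorem exists_norm_bound {X : Type*} [TopologicalSpace X] [CompactSpace X] (k : X → ℂ)
    (hk : Continuous k) : ∃ C, 0 ≤ C ∧ ∀ x, ‖k x‖ ≤ C := by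
  obtain ⟨C, hC⟩ := (isCompact_range hk).isBounded.exists_norm_le
  exact ⟨max C 0, le_max_right _ _, fun x => (hC _ ⟨x, rfl⟩).trans (le_max_left _ _)⟩

theorem memLp_mul_cont {X : Type*} [TopologicalSpace X] [CompactSpace X] [MeasurableSpace X]
    [BorelSpace X] {μ : Measure X} {k F : X → ℂ}
    (hk : Continuous k) (hF : MemLp F 2 μ) : MemLp (fun x => k x * F x) 2 μ := by
  obtain ⟨C, _, hC⟩ := exists_norm_bound k hk
  refine MemLp.of_le_mul (c := C) hF (hk.measurable.aestronglyMeasurable.mul hF.1) ?_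
  refine Eventually.of_forall fun x => ?_
  rw [norm_mul]
  gcongr
  exact hC x

theorem integrable_mul_cont {X : Type*} [TopologicalSpace X] [CompactSpace X] [MeasurableSpace X]
    [BorelSpace X] {μ : Measure X} [IsFiniteMeasure μ] {k F : X → ℂ}
    (hk : Continuous k) (hF : MemLp F 2 μ) : Integrable (fun x => k x * F x) μ :=
  (memLp_mul_cont hk hF).integrable (by norm_num)

variable {d : ℕ}

theorem mem_bigBand_w (w₂ : Td d → Td d → Td d → ℝ)
    (hw₂ : Continuous fun x : Td d × Td d × Td d => w₂ x.1 x.2.1 x.2.2) (K p q : Td d) :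
    w₂ K p q ∈ Icc (mK w₂ K) (MK w₂ K) := by
  have hc : Continuous fun x : Td d × Td d => w₂ K x.1 x.2 :=
    hw₂.comp (continuous_const.prodMk continuous_id)
  exact ⟨ciInf_le (isCompact_range hc).bddBelow (p, q),
    le_ciSup (isCompact_range hc).bddAbove (p, q)⟩

theorem sub_ne_zero_of_band (w₂ : Td d → Td d → Td d → ℝ)
    (hw₂ : Continuous fun x : Td d × Td d × Td d => w₂ x.1 x.2.1 x.2.2) (K : Td d) (z : ℂ)
    (hz : z ∉ bigBand w₂ K) (p q : Td d) : (w₂ K p q : ℂ) - z ≠ 0 := by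
  intro h
  exact hz ⟨w₂ K p q, mem_bigBand_w w₂ hw₂ K p q, sub_eq_zero.1 h⟩

theorem bandKk_subset (w₂ : Td d → Td d → Td d → ℝ)
    (hw₂ : Continuous fun x : Td d × Td d × Td d => w₂ x.1 x.2.1 x.2.2) (K k : Td d) :
    bandKk w₂ K k ⊆ bigBand w₂ K := by
  apply image_mono
  apply Icc_subset_Icc
  · exact le_ciInf fun q => (mem_bigBand_w w₂ hw₂ K k q).1
  · exact ciSup_le fun q => (mem_bigBand_w w₂ hw₂ K k q).2

theorem continuous_w2K {w₂ : Td d → Td d → Td d → ℝ}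
    (hw₂ : Continuous fun x : Td d × Td d × Td d => w₂ x.1 x.2.1 x.2.2) (K : Td d) :
    Continuous fun x : Td d × Td d => (w₂ K x.1 x.2 : ℂ) :=
  Complex.continuous_ofReal.comp (hw₂.comp (continuous_const.prodMk continuous_id))

theorem continuous_ker {v₁ : Td d → ℝ} {w₂ : Td d → Td d → Td d → ℝ} (hv₁ : Continuous v₁)
    (hw₂ : Continuous fun x : Td d × Td d × Td d => w₂ x.1 x.2.1 x.2.2) {K : Td d} {z : ℂ}
    (hz : z ∉ bigBand w₂ K) :
    Continuous fun x : Td d × Td d => (v₁ x.2 : ℂ) / ((w₂ K x.1 x.2 : ℂ) - z) :=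
  (Complex.continuous_ofReal.comp (hv₁.comp continuous_snd)).div
    ((continuous_w2K hw₂ K).sub continuous_const)
    (fun x => sub_ne_zero_of_band w₂ hw₂ K z hz x.1 x.2)

theorem continuous_integral_kernel (k : Td d × Td d → ℂ) (hk : Continuous k) :
    Continuous fun p : Td d => ∫ t, k (p, t) := by
  obtain ⟨C, _, hC⟩ := exists_norm_bound _ hk
  refine continuous_of_dominated (bound := fun _ => C) ?_ ?_ (integrable_const _) ?_
  · intro p
    have h0 : Continuous fun t : Td d => (p, t) := continuous_const.prodMk continuous_id
    exact (hk.comp h0).aestronglyMeasurable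
  · intro p
    exact Eventually.of_forall fun t => hC (p, t)
  · refine Eventually.of_forall fun t => ?_
    have h0 : Continuous fun p : Td d => (p, t) := continuous_id.prodMk continuous_const
    exact hk.comp h0

theorem continuous_Delta {v₁ : Td d → ℝ} {w₁ : Td d → Td d → ℝ} {w₂ : Td d → Td d → Td d → ℝ}
    (hv₁ : Continuous v₁) (hw₁ : Continuous fun x : Td d × Td d => w₁ x.1 x.2)
    (hw₂ : Continuous fun x : Td d × Td d × Td d => w₂ x.1 x.2.1 x.2.2) {K : Td d} {z : ℂ}
    (hz : z ∉ bigBand w₂ K) : Continuous fun p => Delta v₁ w₁ w₂ K p z := by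
  have hk : Continuous fun x : Td d × Td d => (v₁ x.2 : ℂ) ^ 2 / ((w₂ K x.1 x.2 : ℂ) - z) :=
    ((Complex.continuous_ofReal.comp (hv₁.comp continuous_snd)).pow 2).div
    ((continuous_w2K hw₂ K).sub continuous_const)
    (fun x => sub_ne_zero_of_band w₂ hw₂ K z hz x.1 x.2)
  have h1 : Continuous fun p : Td d => ∫ t, (v₁ t : ℂ) ^ 2 / ((w₂ K p t : ℂ) - z) :=
    continuous_integral_kernel _ hk
  have h0 : Continuous fun p : Td d => (K, p) := continuous_const.prodMk continuous_id
  have h2 : Continuous fun p : Td d => (w₁ K p : ℂ) :=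
    Complex.continuous_ofReal.comp (hw₁.comp h0)
  unfold Delta
  exact (h2.sub continuous_const).sub (continuous_const.mul h1)

theorem ae_sub_smul {X : Type*} [MeasurableSpace X] {μ : Measure X} (f g : Lp ℂ 2 μ) (z : ℂ) :
    ∀ᵐ x ∂μ, (f - z • g : Lp ℂ 2 μ) x = f x - z * g x := by
  filter_upwards [Lp.coeFn_sub f (z • g), Lp.coeFn_smul z g] with x h1 h2
  rw [h1, Pi.sub_apply, h2, Pi.smul_apply, smul_eq_mul]

section ham
variable {w₀ v₀ v₁ : Td d → ℝ} {w₁ : Td d → Td d → ℝ} {w₂ : Td d → Td d → Td d → ℝ}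
  {K : Td d} {H : H3 d →L[ℂ] H3 d}

theorem ham0 (hH : IsHamiltonian w₀ v₀ v₁ w₁ w₂ K H) (z : ℂ) (f : H3 d) :
    p0 (H f - z • f) = ((w₀ K : ℂ) - z) * p0 f + ∫ t, (v₀ t : ℂ) * (p1 f) t := by
  rw [p0_sub, p0_smul, (hH f).1]; ring

theorem ham1 (hH : IsHamiltonian w₀ v₀ v₁ w₁ w₂ K H) (z : ℂ) (f : H3 d) :
    ∀ᵐ p, p1 (H f - z • f) p = (v₀ p : ℂ) * p0 f + ((w₁ K p : ℂ) - z) * (p1 f) p +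
          (∫ t, (v₁ t : ℂ) * (p2 f) (p, t)) := by
  rw [p1_sub, p1_smul]
  filter_upwards [(hH f).2.1, ae_sub_smul (p1 (H f)) (p1 f) z] with p h1 h2
  rw [h2, h1]; ring

theorem ham2 (hH : IsHamiltonian w₀ v₀ v₁ w₁ w₂ K H) (z : ℂ) (f : H3 d) :
    ∀ᵐ x : Td d × Td d, p2 (H f - z • f) x =
        ((v₁ x.1 : ℂ) * (p1 f) x.2 + (v₁ x.2 : ℂ) * (p1 f) x.1) / 2 +
          ((w₂ K x.1 x.2 : ℂ) - z) * (p2 f) x := by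
  rw [p2_sub, p2_smul]
  filter_upwards [(hH f).2.2, ae_sub_smul (p2 (H f)) (p2 f) z] with p h1 h2
  rw [h2, h1]; ring

theorem ham_reduced (hH : IsHamiltonian w₀ v₀ v₁ w₁ w₂ K H) (hv₁ : Continuous v₁)
    (hw₂ : Continuous fun x : Td d × Td d × Td d => w₂ x.1 x.2.1 x.2.2) {z : ℂ}
    (hz : z ∉ bigBand w₂ K) (f : H3 d) :
    ∀ᵐ p, p1 (H f - z • f) p -
        ∫ t, (v₁ t : ℂ) / ((w₂ K p t : ℂ) - z) * p2 (H f - z • f) (p, t)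
      = (v₀ p : ℂ) * p0 f + Delta v₁ w₁ w₂ K p z * p1 f p
        - (v₁ p : ℂ) / 2 * ∫ t, (v₁ t : ℂ) / ((w₂ K p t : ℂ) - z) * p1 f t := by
  have hk := continuous_ker hv₁ hw₂ hz
  have hint : Integrable (fun x : Td d × Td d => (v₁ x.2 : ℂ) / ((w₂ K x.1 x.2 : ℂ) - z) *
      p2 (H f - z • f) x) ((volume : Measure (Td d)).prod volume) :=
    integrable_mul_cont hk (Lp.memLp (p2 (H f - z • f)))
  have h2 : ∀ᵐ x ∂((volume : Measure (Td d)).prod volume), _ := ham2 hH z f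
  filter_upwards [ham1 hH z f, Measure.ae_ae_of_ae_prod h2, hint.prod_right_ae] with p h1 h2 h3
  have hk' : Continuous fun t : Td d => (v₁ t : ℂ) / ((w₂ K p t : ℂ) - z) :=
    hk.comp (continuous_const.prodMk continuous_id)
  have i1 : Integrable fun t => (v₁ t : ℂ) / ((w₂ K p t : ℂ) - z) * p1 f t :=
    integrable_mul_cont hk' (Lp.memLp (p1 f))
  have i2 : Integrable fun t : Td d => (v₁ t : ℂ) ^ 2 / ((w₂ K p t : ℂ) - z) := by
    have : Continuous fun t : Td d => (v₁ t : ℂ) ^ 2 / ((w₂ K p t : ℂ) - z) := by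
      have := (Complex.continuous_ofReal.comp hv₁).mul hk'
      refine this.congr fun t => ?_
      change (v₁ t : ℂ) * ((v₁ t : ℂ) / ((w₂ K p t : ℂ) - z)) = _
      ring
    obtain ⟨C, _, hC⟩ := exists_norm_bound _ this
    exact Integrable.of_bound this.aestronglyMeasurable C (Eventually.of_forall hC)
  have key : ∫ t, (v₁ t : ℂ) * (p2 f) (p, t) =
      ∫ t, ((v₁ t : ℂ) / ((w₂ K p t : ℂ) - z) * p2 (H f - z • f) (p, t)
        - (v₁ p : ℂ) / 2 * ((v₁ t : ℂ) / ((w₂ K p t : ℂ) - z) * p1 f t))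
        - p1 f p / 2 * ((v₁ t : ℂ) ^ 2 / ((w₂ K p t : ℂ) - z)) := by
    apply integral_congr_ae
    filter_upwards [h2] with t ht
    have hne := sub_ne_zero_of_band w₂ hw₂ K z hz p t
    rw [ht]
    field_simp
    ring
  have i3 : Integrable fun t => (v₁ t : ℂ) / ((w₂ K p t : ℂ) - z) * p2 (H f - z • f) (p, t)
        - (v₁ p : ℂ) / 2 * ((v₁ t : ℂ) / ((w₂ K p t : ℂ) - z) * p1 f t) :=
    h3.sub (i1.const_mul _)
  rw [h1, key, integral_sub i3 (i2.const_mul _),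
    integral_sub h3 (i1.const_mul _), integral_const_mul, integral_const_mul]
  unfold Delta
  ring

theorem exists_lift (hH : IsHamiltonian w₀ v₀ v₁ w₁ w₂ K H) (hv₁ : Continuous v₁)
    (hw₂ : Continuous fun x : Td d × Td d × Td d => w₂ x.1 x.2.1 x.2.2)
    (hsym : ∀ K p q : Td d, w₂ K p q = w₂ K q p) {z : ℂ}
    (hz : z ∉ bigBand w₂ K) (a : ℂ) (g : L2 d) :
    ∃ f : H3 d, p0 f = a ∧ p1 f = g ∧ p2 (H f - z • f) = 0 := by
  have hk := continuous_ker hv₁ hw₂ hz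
  have hk2 : Continuous fun x : Td d × Td d => (v₁ x.1 : ℂ) / ((w₂ K x.1 x.2 : ℂ) - z) := by
    refine (hk.comp continuous_swap).congr fun x => ?_
    simp [hsym K x.1 x.2]
  have m1 : MemLp (fun x : Td d × Td d => (v₁ x.1 : ℂ) / ((w₂ K x.1 x.2 : ℂ) - z) * g x.2) 2
      volume := memLp_mul_cont hk2 ((Lp.memLp g).comp_snd volume)
  have m2 : MemLp (fun x : Td d × Td d => (v₁ x.2 : ℂ) / ((w₂ K x.1 x.2 : ℂ) - z) * g x.1) 2
      volume := memLp_mul_cont hk ((Lp.memLp g).comp_fst volume)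
  obtain ⟨f, h0, h1, h2⟩ := exists_H3 a g (fun x : Td d × Td d =>
    (-1 / 2 : ℂ) * ((v₁ x.1 : ℂ) / ((w₂ K x.1 x.2 : ℂ) - z) * g x.2
      + (v₁ x.2 : ℂ) / ((w₂ K x.1 x.2 : ℂ) - z) * g x.1)) ((m1.add m2).const_mul _) (by
      intro x
      simp only [Prod.fst_swap, Prod.snd_swap, hsym K x.2 x.1]
      ring)
  refine ⟨f, h0, h1, ?_⟩
  rw [Lp.eq_zero_iff_ae_eq_zero]
  filter_upwards [ham2 hH z f, h2] with x hx hf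
  have hne := sub_ne_zero_of_band w₂ hw₂ K z hz x.1 x.2
  rw [hx, hf, h1]
  simp only [Pi.zero_apply]
  field_simp
  ring

end ham
end

open MeasureTheory Complex Filter Topology Set

noncomputable section
variable {d : ℕ}

theorem memLp_conj {X : Type*} [MeasurableSpace X] {μ : Measure X} {f : X → ℂ}
    (hf : MemLp f 2 μ) : MemLp (fun x => (starRingEnd ℂ) (f x)) 2 μ := by
  refine MemLp.of_le hf (Complex.continuous_conj.comp_aestronglyMeasurable hf.1) ?_
  exact Eventually.of_forall fun x => by simp

theorem integrable_triple {X : Type*} [TopologicalSpace X] [CompactSpace X] [MeasurableSpace X]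
    [BorelSpace X] {μ : Measure X} {k f g : X → ℂ} (hk : Continuous k)
    (hf : MemLp f 2 μ) (hg : MemLp g 2 μ) :
    Integrable (fun x => (starRingEnd ℂ) (f x) * (k x * g x)) μ :=
  (memLp_conj hf).integrable_mul (memLp_mul_cont hk hg)

theorem coupling_eq (v₁ : Td d → ℝ) (hv₁ : Continuous v₁) (f1 : L2 d) (g2 : L2two d) :
    Integrable (fun p => (starRingEnd ℂ) (f1 p) * ∫ t, (v₁ t : ℂ) * g2 (p, t)) ∧
    ∫ p, (starRingEnd ℂ) (f1 p) * ∫ t, (v₁ t : ℂ) * g2 (p, t) =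
      ∫ x : Td d × Td d, (starRingEnd ℂ) (f1 x.1) * ((v₁ x.2 : ℂ) * g2 x) := by
  have hc : Continuous fun x : Td d × Td d => (v₁ x.2 : ℂ) :=
    Complex.continuous_ofReal.comp (hv₁.comp continuous_snd)
  have hi : Integrable (fun x : Td d × Td d =>
      (starRingEnd ℂ) (f1 x.1) * ((v₁ x.2 : ℂ) * g2 x)) ((volume : Measure (Td d)).prod volume) :=
    integrable_triple hc ((Lp.memLp f1).comp_fst volume) (Lp.memLp g2)
  have h1 := hi.integral_prod_left
  simp only [integral_const_mul] at h1
  refine ⟨h1, ?_⟩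
  have h2 := integral_prod _ hi
  simp only [integral_const_mul] at h2
  exact h2.symm

theorem swap_eq (v₁ : Td d → ℝ) (f : H3 d) (g1 : L2 d) :
    ∫ x : Td d × Td d, (starRingEnd ℂ) (p2 f x) * ((v₁ x.1 : ℂ) * g1 x.2) =
    ∫ x : Td d × Td d, (starRingEnd ℂ) (p2 f x) * ((v₁ x.2 : ℂ) * g1 x.1) := by
  have h := integral_prod_swap (μ := (volume : Measure (Td d))) (ν := (volume : Measure (Td d)))
    (fun x : Td d × Td d => (starRingEnd ℂ) (p2 f x) * ((v₁ x.1 : ℂ) * g1 x.2))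
  refine Eq.trans h.symm ?_
  apply integral_congr_ae
  have h3 : ∀ᵐ x ∂((volume : Measure (Td d)).prod volume), p2 f x.swap = p2 f x := p2_symm f
  filter_upwards [h3] with x hx
  rw [hx]
  rfl

theorem inner_ham {w₀ v₀ v₁ : Td d → ℝ} {w₁ : Td d → Td d → ℝ} {w₂ : Td d → Td d → Td d → ℝ}
    {K : Td d} {H : H3 d →L[ℂ] H3 d} (hH : IsHamiltonian w₀ v₀ v₁ w₁ w₂ K H)
    (hv₀ : Continuous v₀) (hv₁ : Continuous v₁)
    (hw₁ : Continuous fun x : Td d × Td d => w₁ x.1 x.2)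
    (hw₂ : Continuous fun x : Td d × Td d × Td d => w₂ x.1 x.2.1 x.2.2) (f g : H3 d) :
    inner ℂ f (H g) = (starRingEnd ℂ) (p0 f) * ((w₀ K : ℂ) * p0 g)
      + ((starRingEnd ℂ) (p0 f) * (∫ t, (v₀ t : ℂ) * p1 g t)
          + (starRingEnd ℂ) (∫ t, (v₀ t : ℂ) * p1 f t) * p0 g)
      + (∫ p, (starRingEnd ℂ) (p1 f p) * ((w₁ K p : ℂ) * p1 g p))
      + ((∫ x : Td d × Td d, (starRingEnd ℂ) (p1 f x.1) * ((v₁ x.2 : ℂ) * p2 g x))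
        + (starRingEnd ℂ) (∫ x : Td d × Td d, (starRingEnd ℂ) (p1 g x.1) * ((v₁ x.2 : ℂ) * p2 f x)))
      + ∫ x : Td d × Td d, (starRingEnd ℂ) (p2 f x) * ((w₂ K x.1 x.2 : ℂ) * p2 g x) := by
  have hcv0 : Continuous fun p : Td d => (v₀ p : ℂ) := Complex.continuous_ofReal.comp hv₀
  have h0 : Continuous fun p : Td d => (K, p) := continuous_const.prodMk continuous_id
  have hcw1 : Continuous fun p : Td d => (w₁ K p : ℂ) :=
    Complex.continuous_ofReal.comp (hw₁.comp h0)
  have hc2 : Continuous fun x : Td d × Td d => (v₁ x.2 : ℂ) :=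
    Complex.continuous_ofReal.comp (hv₁.comp continuous_snd)
  have hc1 : Continuous fun x : Td d × Td d => (v₁ x.1 : ℂ) :=
    Complex.continuous_ofReal.comp (hv₁.comp continuous_fst)
  have e0 : inner ℂ (p0 f) (p0 (H g)) = (starRingEnd ℂ) (p0 f) * ((w₀ K : ℂ) * p0 g)
      + (starRingEnd ℂ) (p0 f) * (∫ t, (v₀ t : ℂ) * p1 g t) := by
    rw [(hH g).1, RCLike.inner_apply]; ring
  have e1 : inner ℂ (p1 f) (p1 (H g)) = (starRingEnd ℂ) (∫ t, (v₀ t : ℂ) * p1 f t) * p0 g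
      + (∫ p, (starRingEnd ℂ) (p1 f p) * ((w₁ K p : ℂ) * p1 g p))
      + (∫ x : Td d × Td d, (starRingEnd ℂ) (p1 f x.1) * ((v₁ x.2 : ℂ) * p2 g x)) := by
    obtain ⟨ic, ec⟩ := coupling_eq v₁ hv₁ (p1 f) (p2 g)
    have ia : Integrable fun p => (starRingEnd ℂ) ((v₀ p : ℂ) * p1 f p) :=
      (memLp_conj (memLp_mul_cont hcv0 (Lp.memLp (p1 f)))).integrable (by norm_num)
    have ib := integrable_triple hcw1 (Lp.memLp (p1 f)) (Lp.memLp (p1 g))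
    have iab : Integrable fun p => (starRingEnd ℂ) ((v₀ p : ℂ) * p1 f p) * p0 g +
        (starRingEnd ℂ) (p1 f p) * ((w₁ K p : ℂ) * p1 g p) := (ia.mul_const _).add ib
    rw [← ec, ← integral_conj, ← integral_mul_const, ← integral_add (ia.mul_const _) ib,
      ← integral_add iab ic, L2.inner_def]
    apply integral_congr_ae
    filter_upwards [(hH g).2.1] with p hp
    rw [hp, RCLike.inner_apply]
    simp only [map_mul, Complex.conj_ofReal]
    ring
  have e2 : inner ℂ (p2 f) (p2 (H g)) =
      (starRingEnd ℂ) (∫ x : Td d × Td d, (starRingEnd ℂ) (p1 g x.1) * ((v₁ x.2 : ℂ) * p2 f x))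
      + ∫ x : Td d × Td d, (starRingEnd ℂ) (p2 f x) * ((w₂ K x.1 x.2 : ℂ) * p2 g x) := by
    have ia : Integrable fun x : Td d × Td d => (starRingEnd ℂ) (p2 f x) * ((v₁ x.1 : ℂ) * p1 g x.2) :=
      integrable_triple hc1 (Lp.memLp (p2 f)) ((Lp.memLp (p1 g)).comp_snd volume)
    have ib : Integrable fun x : Td d × Td d => (starRingEnd ℂ) (p2 f x) * ((v₁ x.2 : ℂ) * p1 g x.1) :=
      integrable_triple hc2 (Lp.memLp (p2 f)) ((Lp.memLp (p1 g)).comp_fst volume)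
    have ic := integrable_triple (continuous_w2K hw₂ K) (Lp.memLp (p2 f)) (Lp.memLp (p2 g))
    have iab : Integrable fun x : Td d × Td d =>
        (1 / 2 : ℂ) * ((starRingEnd ℂ) (p2 f x) * ((v₁ x.1 : ℂ) * p1 g x.2)) +
        (1 / 2 : ℂ) * ((starRingEnd ℂ) (p2 f x) * ((v₁ x.2 : ℂ) * p1 g x.1)) :=
      (ia.const_mul _).add (ib.const_mul _)
    have hP : (starRingEnd ℂ)
        (∫ x : Td d × Td d, (starRingEnd ℂ) (p1 g x.1) * ((v₁ x.2 : ℂ) * p2 f x))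
        = (1 / 2 : ℂ) * (∫ x : Td d × Td d, (starRingEnd ℂ) (p2 f x) * ((v₁ x.1 : ℂ) * p1 g x.2)) +
        (1 / 2 : ℂ) * ∫ x : Td d × Td d, (starRingEnd ℂ) (p2 f x) * ((v₁ x.2 : ℂ) * p1 g x.1) := by
      rw [swap_eq, ← integral_conj, ← add_mul]
      norm_num
      congr 1
      ext x
      ring
    rw [hP, ← integral_const_mul, ← integral_const_mul, ← integral_add (ia.const_mul _)
      (ib.const_mul _), ← integral_add iab ic, L2.inner_def]
    apply integral_congr_ae
    filter_upwards [(hH g).2.2] with p hp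
    rw [hp, RCLike.inner_apply]
    ring
  rw [H3_inner, e0, e1, e2]
  ring

theorem ham_selfAdjoint {w₀ v₀ v₁ : Td d → ℝ} {w₁ : Td d → Td d → ℝ} {w₂ : Td d → Td d → Td d → ℝ}
    {K : Td d} {H : H3 d →L[ℂ] H3 d} (hH : IsHamiltonian w₀ v₀ v₁ w₁ w₂ K H)
    (hv₀ : Continuous v₀) (hv₁ : Continuous v₁)
    (hw₁ : Continuous fun x : Td d × Td d => w₁ x.1 x.2)
    (hw₂ : Continuous fun x : Td d × Td d × Td d => w₂ x.1 x.2.1 x.2.2) : IsSelfAdjoint H := by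
  rw [ContinuousLinearMap.isSelfAdjoint_iff_isSymmetric]
  intro f g
  change inner ℂ (H f) g = inner ℂ f (H g)
  rw [← inner_conj_symm (𝕜 := ℂ) (H f) g, inner_ham hH hv₀ hv₁ hw₁ hw₂, inner_ham hH hv₀ hv₁ hw₁ hw₂]
  have s1 : (starRingEnd ℂ) (∫ p, (starRingEnd ℂ) (p1 g p) * ((w₁ K p : ℂ) * p1 f p)) =
      ∫ p, (starRingEnd ℂ) (p1 f p) * ((w₁ K p : ℂ) * p1 g p) := by
    rw [← integral_conj]
    congr 1; ext x
    simp only [map_mul, Complex.conj_ofReal, Complex.conj_conj]; ring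
  have s2 : (starRingEnd ℂ) (∫ x : Td d × Td d,
        (starRingEnd ℂ) (p2 g x) * ((w₂ K x.1 x.2 : ℂ) * p2 f x)) =
      ∫ x : Td d × Td d, (starRingEnd ℂ) (p2 f x) * ((w₂ K x.1 x.2 : ℂ) * p2 g x) := by
    rw [← integral_conj]
    congr 1; ext x
    simp only [map_mul, Complex.conj_ofReal, Complex.conj_conj]; ring
  simp only [map_add, map_mul, s1, s2, Complex.conj_ofReal, Complex.conj_conj]
  ring
end

open MeasureTheory Complex Filter Topology Set

noncomputable section
variable {d : ℕ}

theorem lintegral_fst_L2 (f : L2 d) :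
    ∫⁻ x : Td d × Td d, ‖f x.1‖ₑ ^ 2 = volume (univ : Set (Td d)) * ‖f‖ₑ ^ 2 := by
  have hm : AEStronglyMeasurable f (volume : Measure (Td d)) := Lp.aestronglyMeasurable f
  have hm' : AEStronglyMeasurable (fun x : Td d × Td d => f x.1)
    ((volume : Measure (Td d)).prod volume) := hm.comp_fst
  have h := lintegral_prod _ (hm'.enorm.pow_const 2)
  refine h.trans ?_
  rw [enorm_sq_L2, ← lintegral_const_mul' _ _ (measure_ne_top _ _)]
  simp [mul_comm]

theorem lintegral_snd_L2 (f : L2 d) :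
    ∫⁻ x : Td d × Td d, ‖f x.2‖ₑ ^ 2 = volume (univ : Set (Td d)) * ‖f‖ₑ ^ 2 := by
  have hm : AEStronglyMeasurable f (volume : Measure (Td d)) := Lp.aestronglyMeasurable f
  have hm' : AEStronglyMeasurable (fun x : Td d × Td d => f x.2)
    ((volume : Measure (Td d)).prod volume) := hm.comp_snd
  have h := lintegral_prod _ (hm'.enorm.pow_const 2)
  refine h.trans ?_
  rw [enorm_sq_L2]
  simp [mul_comm]

theorem enorm_sq_le_of_norm {a b c e x : ℂ} {D : ℝ} (hD : 0 ≤ D)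
    (h : ‖x‖ ^ 2 ≤ D * (‖a‖ ^ 2 + ‖b‖ ^ 2 + ‖c‖ ^ 2 + ‖e‖ ^ 2)) :
    ‖x‖ₑ ^ 2 ≤ ENNReal.ofReal D * (‖a‖ₑ ^ 2 + ‖b‖ₑ ^ 2 + ‖c‖ₑ ^ 2 + ‖e‖ₑ ^ 2) := by
  simp only [← ofReal_norm]
  rw [← ENNReal.ofReal_pow (by positivity), ← ENNReal.ofReal_pow (by positivity),
    ← ENNReal.ofReal_pow (by positivity), ← ENNReal.ofReal_pow (by positivity),
    ← ENNReal.ofReal_pow (by positivity), ← ENNReal.ofReal_add (by positivity) (by positivity),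
    ← ENNReal.ofReal_add (by positivity) (by positivity),
    ← ENNReal.ofReal_add (by positivity) (by positivity), ← ENNReal.ofReal_mul hD]
  exact ENNReal.ofReal_le_ofReal h

theorem sq_bound4 {x a b c e : ℝ} {D : ℝ} (hx : 0 ≤ x) (_hD : 0 ≤ D)
    (h : x ≤ D * (a + b + c + e)) :
    x ^ 2 ≤ (4 * D ^ 2) * (a ^ 2 + b ^ 2 + c ^ 2 + e ^ 2) := by
  have h1 : x ^ 2 ≤ (D * (a + b + c + e)) ^ 2 := pow_le_pow_left₀ hx h 2
  have h2 : (a + b + c + e) ^ 2 ≤ 4 * (a ^ 2 + b ^ 2 + c ^ 2 + e ^ 2) := by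
    nlinarith [sq_nonneg (a - b), sq_nonneg (a - c), sq_nonneg (a - e), sq_nonneg (b - c),
      sq_nonneg (b - e), sq_nonneg (c - e)]
  calc x ^ 2 ≤ D ^ 2 * (a + b + c + e) ^ 2 := by rw [← mul_pow]; exact h1
    _ ≤ D ^ 2 * (4 * (a ^ 2 + b ^ 2 + c ^ 2 + e ^ 2)) := by gcongr
    _ = _ := by ring

theorem aesm_kernel (k : Td d × Td d → ℂ) (hk : Continuous k) (f : L2 d) :
    AEStronglyMeasurable (fun p => ∫ t, k (p, t) * f t) (volume : Measure (Td d)) := by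
  have hm : AEStronglyMeasurable f (volume : Measure (Td d)) := Lp.aestronglyMeasurable f
  have hm' : AEStronglyMeasurable (fun x : Td d × Td d => k x * f x.2)
    ((volume : Measure (Td d)).prod volume) := hk.aestronglyMeasurable.mul hm.comp_snd
  exact hm'.integral_prod_right'

section ham
variable {w₀ v₀ v₁ : Td d → ℝ} {w₁ : Td d → Td d → ℝ} {w₂ : Td d → Td d → Td d → ℝ}
  {K : Td d} {H : H3 d →L[ℂ] H3 d}

theorem apriori1 (hH : IsHamiltonian w₀ v₀ v₁ w₁ w₂ K H) (hv₀ : Continuous v₀) (hv₁ : Continuous v₁)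
    (hw₁ : Continuous fun x : Td d × Td d => w₁ x.1 x.2)
    (hw₂ : Continuous fun x : Td d × Td d × Td d => w₂ x.1 x.2.1 x.2.2) {z : ℂ}
    (hz : z ∉ bigBand w₂ K) (hD : ∀ p, Delta v₁ w₁ w₂ K p z ≠ 0) :
    ∃ D : ENNReal, D ≠ ⊤ ∧ ∀ f : H3 d, ‖p1 f‖ₑ ^ 2 ≤ D * (‖p1 (H f - z • f)‖ₑ ^ 2 +
      ‖p0 f‖ₑ ^ 2 * volume (univ : Set (Td d)) +
      ∫⁻ p, ‖∫ t, (v₁ t : ℂ) / ((w₂ K p t : ℂ) - z) * p1 f t‖ₑ ^ 2) + 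
      D * ‖p2 (H f - z • f)‖ₑ ^ 2 := by
  have hk := continuous_ker hv₁ hw₂ hz
  obtain ⟨Ck, hCk0, hCk⟩ := exists_norm_bound _ hk
  obtain ⟨C0, hC00, hC0⟩ := exists_norm_bound (fun p : Td d => (v₀ p : ℂ))
    (Complex.continuous_ofReal.comp hv₀)
  obtain ⟨C1, hC10, hC1⟩ := exists_norm_bound (fun p : Td d => (v₁ p : ℂ) / 2)
    ((Complex.continuous_ofReal.comp hv₁).div_const 2)
  obtain ⟨C2, hC20, hC2⟩ := exists_norm_bound (fun p : Td d => (Delta v₁ w₁ w₂ K p z)⁻¹)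
    ((continuous_Delta hv₁ hw₁ hw₂ hz).inv₀ hD)
  let E : ℝ := C2 * (1 + C0 + C1)
  have hE : 0 ≤ E := by positivity
  let D1 : ENNReal := ENNReal.ofReal (4 * E ^ 2)
  let D2 : ENNReal := ENNReal.ofReal Ck ^ 2 * volume (univ : Set (Td d))
  have hD1 : D1 ≠ ⊤ := ENNReal.ofReal_ne_top
  have hD2 : D2 ≠ ⊤ := ENNReal.mul_ne_top (by simp) (measure_ne_top _ _)
  refine ⟨D1 * (1 + D2), ENNReal.mul_ne_top hD1 (by simp [hD2]), fun f => ?_⟩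
  set r := H f - z • f with hr
  have hae : ∀ᵐ p, ‖p1 f p‖ₑ ^ 2 ≤ D1 * (‖p1 r p‖ₑ ^ 2 + ‖p0 f‖ₑ ^ 2 +
      ‖∫ t, (v₁ t : ℂ) / ((w₂ K p t : ℂ) - z) * p1 f t‖ₑ ^ 2 +
      ‖∫ t, (v₁ t : ℂ) / ((w₂ K p t : ℂ) - z) * p2 r (p, t)‖ₑ ^ 2) := by
    filter_upwards [ham_reduced hH hv₁ hw₂ hz f] with p hp
    apply enorm_sq_le_of_norm (by positivity)
    apply sq_bound4 (norm_nonneg _) hE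
    rw [← hr] at hp
    set I := ∫ t, (v₁ t : ℂ) / ((w₂ K p t : ℂ) - z) * p1 f t
    set Q := ∫ t, (v₁ t : ℂ) / ((w₂ K p t : ℂ) - z) * p2 r (p, t)
    have e : p1 f p = (Delta v₁ w₁ w₂ K p z)⁻¹ *
        (p1 r p - Q - (v₀ p : ℂ) * p0 f + (v₁ p : ℂ) / 2 * I) := by
      rw [hp]
      field_simp [hD p]
      ring
    rw [e, norm_mul]
    have n1 : ‖p1 r p - Q - (v₀ p : ℂ) * p0 f + (v₁ p : ℂ) / 2 * I‖ ≤
        ‖p1 r p‖ + ‖Q‖ + C0 * ‖p0 f‖ + C1 * ‖I‖ := by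
      refine (norm_add_le _ _).trans (add_le_add ((norm_sub_le _ _).trans
        (add_le_add (norm_sub_le _ _) ?_)) ?_)
      · rw [norm_mul]; gcongr; exact hC0 p
      · rw [norm_mul]; gcongr; exact hC1 p
    have n2 : ‖p1 r p‖ + ‖Q‖ + C0 * ‖p0 f‖ + C1 * ‖I‖ ≤
        (1 + C0 + C1) * (‖p1 r p‖ + ‖p0 f‖ + ‖I‖ + ‖Q‖) := by
      have := norm_nonneg (p1 r p)
      have := norm_nonneg (p0 f)
      have := norm_nonneg I
      have := norm_nonneg Q
      have : 0 ≤ (C0 + C1) * (‖p1 r p‖ + ‖Q‖) + (1 + C1) * ‖p0 f‖ + (1 + C0) * ‖I‖ := by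
        positivity
      nlinarith
    calc _ ≤ C2 * ((1 + C0 + C1) * (‖p1 r p‖ + ‖p0 f‖ + ‖I‖ + ‖Q‖)) :=
          mul_le_mul (hC2 p) (n1.trans n2) (norm_nonneg _) hC20
      _ = _ := by simp only [E]; ring
  have hm1 : AEMeasurable (fun p => ‖p1 r p‖ₑ ^ 2) :=
    (Lp.aestronglyMeasurable (p1 r)).enorm.pow_const 2
  have hm2 : AEMeasurable (fun p =>
      ‖∫ t, (v₁ t : ℂ) / ((w₂ K p t : ℂ) - z) * p1 f t‖ₑ ^ 2) :=
    (aesm_kernel _ hk (p1 f)).enorm.pow_const 2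
  have hQ : ∫⁻ p, ‖∫ t, (v₁ t : ℂ) / ((w₂ K p t : ℂ) - z) * p2 r (p, t)‖ₑ ^ 2 ≤
      D2 * ‖p2 r‖ₑ ^ 2 :=
    partial_lintegral (p2 r) (fun x : Td d × Td d => (v₁ x.2 : ℂ) / ((w₂ K x.1 x.2 : ℂ) - z))
      Ck hCk univ MeasurableSet.univ (by simp)
  rw [enorm_sq_L2]
  refine (lintegral_mono_ae hae).trans ?_
  have hm3 : AEMeasurable (fun p => ‖p1 r p‖ₑ ^ 2 + ‖p0 f‖ₑ ^ 2) := hm1.add aemeasurable_const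
  have hm4 : AEMeasurable (fun p => ‖p1 r p‖ₑ ^ 2 + ‖p0 f‖ₑ ^ 2 +
      ‖∫ t, (v₁ t : ℂ) / ((w₂ K p t : ℂ) - z) * p1 f t‖ₑ ^ 2) := hm3.add hm2
  rw [lintegral_const_mul' _ _ hD1, lintegral_add_left' hm4,
    lintegral_add_left' hm3, lintegral_add_left' hm1, lintegral_const,
    ← enorm_sq_L2, mul_add]
  gcongr ?_ + ?_
  · gcongr
    exact le_mul_of_one_le_right' (by simp)
  · rw [mul_assoc]
    gcongr
    refine hQ.trans ?_
    gcongr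
    simp

theorem apriori2 (hH : IsHamiltonian w₀ v₀ v₁ w₁ w₂ K H) (hv₁ : Continuous v₁)
    (hw₂ : Continuous fun x : Td d × Td d × Td d => w₂ x.1 x.2.1 x.2.2) 
    {z : ℂ}
    (hz : z ∉ bigBand w₂ K) :
    ∃ D : ENNReal, D ≠ ⊤ ∧ ∀ f : H3 d, ‖p2 f‖ₑ ^ 2 ≤
      D * (‖p2 (H f - z • f)‖ₑ ^ 2 + ‖p1 f‖ₑ ^ 2) := by
  have hw : Continuous fun x : Td d × Td d => ((w₂ K x.1 x.2 : ℂ) - z)⁻¹ :=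
    ((continuous_w2K hw₂ K).sub continuous_const).inv₀
      (fun x => sub_ne_zero_of_band w₂ hw₂ K z hz x.1 x.2)
  obtain ⟨Cw, hCw0, hCw⟩ := exists_norm_bound _ hw
  obtain ⟨C1, hC10, hC1⟩ := exists_norm_bound (fun p : Td d => (v₁ p : ℂ) / 2)
    ((Complex.continuous_ofReal.comp hv₁).div_const 2)
  let E : ℝ := Cw * (1 + C1)
  have hE : 0 ≤ E := by positivity
  let D1 : ENNReal := ENNReal.ofReal (4 * E ^ 2)
  let D2 : ENNReal := volume (univ : Set (Td d))
  have hD1 : D1 ≠ ⊤ := ENNReal.ofReal_ne_top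
  have hD2 : D2 ≠ ⊤ := measure_ne_top _ _
  refine ⟨D1 * (1 + 2 * D2), ENNReal.mul_ne_top hD1 (by simp [hD2, ENNReal.mul_eq_top]),
    fun f => ?_⟩
  set r := H f - z • f with hr
  have hae : ∀ᵐ x : Td d × Td d, ‖p2 f x‖ₑ ^ 2 ≤ D1 * (‖p2 r x‖ₑ ^ 2 + ‖p1 f x.1‖ₑ ^ 2 +
      ‖p1 f x.2‖ₑ ^ 2 + ‖(0 : ℂ)‖ₑ ^ 2) := by
    filter_upwards [ham2 hH z f] with x hx
    apply enorm_sq_le_of_norm (by positivity)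
    apply sq_bound4 (norm_nonneg _) hE
    rw [← hr] at hx
    have hne := sub_ne_zero_of_band w₂ hw₂ K z hz x.1 x.2
    have e : p2 f x = ((w₂ K x.1 x.2 : ℂ) - z)⁻¹ *
        (p2 r x - (v₁ x.1 : ℂ) / 2 * p1 f x.2 - (v₁ x.2 : ℂ) / 2 * p1 f x.1) := by
      rw [hx]
      field_simp
      ring
    rw [e, norm_mul, norm_zero, add_zero]
    have n1 : ‖p2 r x - (v₁ x.1 : ℂ) / 2 * p1 f x.2 - (v₁ x.2 : ℂ) / 2 * p1 f x.1‖ ≤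
        ‖p2 r x‖ + C1 * ‖p1 f x.2‖ + C1 * ‖p1 f x.1‖ := by
      refine (norm_sub_le _ _).trans (add_le_add ((norm_sub_le _ _).trans
        (add_le_add le_rfl ?_)) ?_)
      · rw [norm_mul]; gcongr; exact hC1 _
      · rw [norm_mul]; gcongr; exact hC1 _
    have n2 : ‖p2 r x‖ + C1 * ‖p1 f x.2‖ + C1 * ‖p1 f x.1‖ ≤
        (1 + C1) * (‖p2 r x‖ + ‖p1 f x.1‖ + ‖p1 f x.2‖) := by
      have : 0 ≤ C1 * ‖p2 r x‖ + ‖p1 f x.1‖ + ‖p1 f x.2‖ := by positivity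
      nlinarith
    calc _ ≤ Cw * ((1 + C1) * (‖p2 r x‖ + ‖p1 f x.1‖ + ‖p1 f x.2‖)) :=
          mul_le_mul (hCw x) (n1.trans n2) (norm_nonneg _) hCw0
      _ = _ := by simp only [E]; ring
  have hm1 : AEMeasurable (fun x => ‖p2 r x‖ₑ ^ 2) :=
    (Lp.aestronglyMeasurable (p2 r)).enorm.pow_const 2
  have hm2' : AEStronglyMeasurable (fun x : Td d × Td d => p1 f x.1)
      ((volume : Measure (Td d)).prod volume) := (Lp.aestronglyMeasurable (p1 f)).comp_fst
  have hm2 : AEMeasurable (fun x : Td d × Td d => ‖p1 f x.1‖ₑ ^ 2) := hm2'.enorm.pow_const 2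
  rw [enorm_sq_L2]
  refine (lintegral_mono_ae hae).trans ?_
  simp only [enorm_zero, ne_eq, OfNat.ofNat_ne_zero, not_false_eq_true, zero_pow, add_zero]
  have hm3 : AEMeasurable (fun x : Td d × Td d => ‖p2 r x‖ₑ ^ 2 + ‖p1 f x.1‖ₑ ^ 2) :=
    hm1.add hm2
  rw [lintegral_const_mul' _ _ hD1, lintegral_add_left' hm3, lintegral_add_left' hm1,
    ← enorm_sq_L2, lintegral_fst_L2, lintegral_snd_L2, mul_assoc]
  gcongr
  calc ‖p2 r‖ₑ ^ 2 + D2 * ‖p1 f‖ₑ ^ 2 + D2 * ‖p1 f‖ₑ ^ 2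
      ≤ ‖p2 r‖ₑ ^ 2 + D2 * ‖p1 f‖ₑ ^ 2 + D2 * ‖p1 f‖ₑ ^ 2 +
        (‖p1 f‖ₑ ^ 2 + 2 * D2 * ‖p2 r‖ₑ ^ 2) := le_self_add
    _ = _ := by ring
end ham
end

open MeasureTheory Complex Filter Topology Set

noncomputable section
variable {d : ℕ}

theorem orthonormal_weak {H' : Type*} [NormedAddCommGroup H'] [InnerProductSpace ℂ H']
    {u : ℕ → H'} (hu : Orthonormal ℂ u) (x : H') :
    Tendsto (fun n => inner ℂ x (u n)) atTop (𝓝 0) := by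
  have h := (hu.inner_products_summable (x := x)).tendsto_atTop_zero
  rw [tendsto_zero_iff_norm_tendsto_zero]
  have h2 := (Real.continuous_sqrt.tendsto 0).comp h
  rw [Real.sqrt_zero] at h2
  refine h2.congr fun n => ?_
  simp only [Function.comp]
  rw [Real.sqrt_sq (norm_nonneg _), norm_inner_symm]

theorem exists_H3' (a : ℂ) (g : L2 d) : ∃ f : H3 d, p0 f = a ∧ p1 f = g ∧ p2 f = 0 := by
  obtain ⟨f, h0, h1, h2⟩ := exists_H3 a g (fun _ => 0) MemLp.zero (fun _ => rfl)
  exact ⟨f, h0, h1, (Lp.eq_zero_iff_ae_eq_zero).2 h2⟩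

theorem norm_p1_le (f : H3 d) : ‖p1 f‖ ≤ ‖f‖ := by
  apply le_of_sq_le_sq _ (norm_nonneg _)
  rw [H3_norm_sq f]; nlinarith [sq_nonneg ‖p0 f‖, sq_nonneg ‖p2 f‖]
theorem norm_p2_le (f : H3 d) : ‖p2 f‖ ≤ ‖f‖ := by
  apply le_of_sq_le_sq _ (norm_nonneg _)
  rw [H3_norm_sq f]; nlinarith [sq_nonneg ‖p0 f‖, sq_nonneg ‖p1 f‖]

theorem tendsto_enorm_sq {E : Type*} [SeminormedAddCommGroup E] {u : ℕ → E}
    (h : Tendsto (fun n => ‖u n‖) atTop (𝓝 0)) : Tendsto (fun n => ‖u n‖ₑ ^ 2) atTop (𝓝 0) := by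
  have h1 : Tendsto (fun n => ENNReal.ofReal (‖u n‖ ^ 2)) atTop (𝓝 (ENNReal.ofReal (0 ^ 2))) :=
    ENNReal.tendsto_ofReal (h.pow 2)
  simp only [ne_eq, OfNat.ofNat_ne_zero, not_false_eq_true, zero_pow, ENNReal.ofReal_zero] at h1
  refine h1.congr fun n => ?_
  rw [ENNReal.ofReal_pow (norm_nonneg _), ofReal_norm]

theorem tendsto_of_enorm_sq {E : Type*} [SeminormedAddCommGroup E] {u : ℕ → E}
    (h : Tendsto (fun n => ‖u n‖ₑ ^ 2) atTop (𝓝 0)) : Tendsto (fun n => ‖u n‖ ^ 2) atTop (𝓝 0) := by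
  have h1 := (ENNReal.tendsto_toReal (a := 0) (by simp)).comp h
  refine (h1.congr fun n => ?_)
  simp [Function.comp, ENNReal.toReal_pow]

theorem tendsto_mul_zero {D : ENNReal} (hD : D ≠ ⊤) {a : ℕ → ENNReal}
    (h : Tendsto a atTop (𝓝 0)) : Tendsto (fun n => D * a n) atTop (𝓝 0) := by
  have := ENNReal.Tendsto.const_mul (a := D) h (Or.inr hD)
  rwa [mul_zero] at this

/-- compactness of the integral operator along weakly null sequences -/
theorem tendsto_kernel (k : Td d × Td d → ℂ) (hk : Continuous k) (f : ℕ → L2 d)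
    (hb : ∀ n, ‖f n‖ ≤ 1) (hw : ∀ h : L2 d, Tendsto (fun n => inner ℂ h (f n)) atTop (𝓝 0)) :
    Tendsto (fun n => ∫⁻ p, ‖∫ t, k (p, t) * f n t‖ₑ ^ 2) atTop (𝓝 0) := by
  obtain ⟨C, hC0, hC⟩ := exists_norm_bound k hk
  set B : ℝ := C * √(volume (univ : Set (Td d))).toReal
  have hbd : ∀ n p, ‖∫ t, k (p, t) * f n t‖ ≤ B := by
    intro n p
    refine (functional_bound (f n) (fun t => k (p, t)) C hC0 (fun t => hC _) univ
      MeasurableSet.univ (by simp)).trans ?_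
    exact mul_le_of_le_one_right (by positivity) (hb n)
  have := tendsto_lintegral_of_dominated_convergence' (μ := (volume : Measure (Td d)))
    (F := fun n p => ‖∫ t, k (p, t) * f n t‖ₑ ^ 2) (f := fun _ => 0)
    (fun _ => ENNReal.ofReal B ^ 2)
    (fun n => (aesm_kernel k hk (f n)).enorm.pow_const 2) (by
      intro n
      refine Eventually.of_forall fun p => ?_
      simp only
      gcongr
      rw [← ofReal_norm]
      exact ENNReal.ofReal_le_ofReal (hbd n p)) (by
      rw [lintegral_const]
      exact ENNReal.mul_ne_top (by simp) (measure_ne_top _ _)) (by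
      refine Eventually.of_forall fun p => ?_
      apply tendsto_enorm_sq
      rw [← tendsto_zero_iff_norm_tendsto_zero]
      have hcp : Continuous fun t : Td d => (p, t) := continuous_const.prodMk continuous_id
      have hm : MemLp (fun t => (starRingEnd ℂ) (k (p, t))) 2 (volume : Measure (Td d)) :=
        MemLp.of_bound (Complex.continuous_conj.comp (hk.comp hcp)).aestronglyMeasurable C
          (Eventually.of_forall fun t => by simpa using hC (p, t))
      refine (hw (hm.toLp _)).congr fun n => ?_
      rw [L2.inner_def]
      apply integral_congr_ae
      filter_upwards [hm.coeFn_toLp] with t ht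
      rw [ht, RCLike.inner_apply, Complex.conj_conj, mul_comm])
  simpa using this

section ham
variable {w₀ v₀ v₁ : Td d → ℝ} {w₁ : Td d → Td d → ℝ} {w₂ : Td d → Td d → Td d → ℝ}
  {K : Td d} {H : H3 d →L[ℂ] H3 d}

theorem notMem_essSpec (hH : IsHamiltonian w₀ v₀ v₁ w₁ w₂ K H) (hv₀ : Continuous v₀)
    (hv₁ : Continuous v₁)
    (hw₁ : Continuous fun x : Td d × Td d => w₁ x.1 x.2)
    (hw₂ : Continuous fun x : Td d × Td d × Td d => w₂ x.1 x.2.1 x.2.2) {z : ℂ}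
    (hz : z ∉ bigBand w₂ K) (hD : ∀ p, Delta v₁ w₁ w₂ K p z ≠ 0) : z ∉ essSpec H := by
  rintro ⟨u, hu, hr⟩
  obtain ⟨D1, hD1, hb1⟩ := apriori1 hH hv₀ hv₁ hw₁ hw₂ hz hD
  obtain ⟨D2, hD2, hb2⟩ := apriori2 hH hv₁ hw₂ hz
  have t0 : Tendsto (fun n => p0 (u n)) atTop (𝓝 0) := by
    obtain ⟨e, h0, h1, h2⟩ := exists_H3' (d := d) 1 0
    refine (orthonormal_weak hu e).congr fun n => ?_
    rw [H3_inner, h0, h1, h2]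
    simp
  have tw : ∀ h : L2 d, Tendsto (fun n => inner ℂ h (p1 (u n))) atTop (𝓝 0) := by
    intro h
    obtain ⟨e, h0, h1, h2⟩ := exists_H3' (d := d) 0 h
    refine (orthonormal_weak hu e).congr fun n => ?_
    rw [H3_inner, h0, h1, h2]
    simp
  have tI := tendsto_kernel _ (continuous_ker hv₁ hw₂ hz) (fun n => p1 (u n))
    (fun n => (norm_p1_le _).trans (hu.1 n).le) tw
  have t0' := tendsto_enorm_sq (tendsto_zero_iff_norm_tendsto_zero.1 t0)
  have r1 : Tendsto (fun n => ‖p1 (H (u n) - z • u n)‖ₑ ^ 2) atTop (𝓝 0) :=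
    tendsto_enorm_sq (squeeze_zero (fun _ => norm_nonneg _) (fun n => norm_p1_le _) hr)
  have r2 : Tendsto (fun n => ‖p2 (H (u n) - z • u n)‖ₑ ^ 2) atTop (𝓝 0) :=
    tendsto_enorm_sq (squeeze_zero (fun _ => norm_nonneg _) (fun n => norm_p2_le _) hr)
  have t1 : Tendsto (fun n => ‖p1 (u n)‖ₑ ^ 2) atTop (𝓝 0) := by
    refine tendsto_of_tendsto_of_tendsto_of_le_of_le tendsto_const_nhds ?_ (fun n => zero_le)
      (fun n => hb1 (u n))
    have h3 := tendsto_mul_zero (measure_ne_top (volume : Measure (Td d)) univ) t0'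
    simp only [mul_comm (volume (univ : Set (Td d)))] at h3
    have h4 := (r1.add h3).add tI
    simp only [add_zero] at h4
    have h5 := (tendsto_mul_zero hD1 h4).add (tendsto_mul_zero hD1 r2)
    simpa only [add_zero] using h5
  have t2 : Tendsto (fun n => ‖p2 (u n)‖ₑ ^ 2) atTop (𝓝 0) := by
    refine tendsto_of_tendsto_of_tendsto_of_le_of_le tendsto_const_nhds ?_ (fun n => zero_le)
      (fun n => hb2 (u n))
    have h4 := r2.add t1
    simp only [add_zero] at h4
    exact tendsto_mul_zero hD2 h4
  have hfin := ((tendsto_of_enorm_sq t0').add (tendsto_of_enorm_sq t1)).add (tendsto_of_enorm_sq t2)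
  simp only [add_zero, ← H3_norm_sq, hu.1, one_pow] at hfin
  exact one_ne_zero (tendsto_nhds_unique tendsto_const_nhds hfin)

theorem eigen_iff (hH : IsHamiltonian w₀ v₀ v₁ w₁ w₂ K H)
    (hv₁ : Continuous v₁)
    (hw₂ : Continuous fun x : Td d × Td d × Td d => w₂ x.1 x.2.1 x.2.2)
    (hsym : ∀ K p q : Td d, w₂ K p q = w₂ K q p) {z : ℂ}
    (hz : z ∉ bigBand w₂ K) (hD : ∀ p, Delta v₁ w₁ w₂ K p z ≠ 0)
    {T : Hkk d →L[ℂ] Hkk d} (hT : IsTOp w₀ v₀ v₁ w₁ w₂ K z T) :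
    (∃ u, u ≠ 0 ∧ H u = z • u) ↔ ∃ g : Hkk d, g ≠ 0 ∧ T g = g := by
  have hI : ∀ (g : L2 d) (p : Td d), ∫ t, (v₁ t : ℂ) * g t / ((w₂ K p t : ℂ) - z) =
      ∫ t, (v₁ t : ℂ) / ((w₂ K p t : ℂ) - z) * g t := by
    intro g p
    congr 1; ext t; ring
  constructor
  · rintro ⟨f, hf0, hf⟩
    have hr : H f - z • f = 0 := sub_eq_zero.2 hf
    obtain ⟨g, g0, g1⟩ := exists_Hkk (p0 f) (p1 f)
    refine ⟨g, ?_, ?_⟩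
    · rintro rfl
      apply hf0
      have f0 : p0 f = 0 := g0.symm
      have f1 : p1 f = 0 := g1.symm
      refine H3_ext f0 f1 ?_
      rw [p2_zero, Lp.eq_zero_iff_ae_eq_zero]
      have h2 := ham2 hH z f
      rw [hr, p2_zero, f1] at h2
      have hz1 : ∀ᵐ x : Td d, (0 : L2 d) x = 0 := Lp.coeFn_zero _ _ _
      have hz2 : ∀ᵐ x : Td d × Td d, (0 : L2two d) x = 0 := Lp.coeFn_zero _ _ _
      have ha : ∀ᵐ x : Td d × Td d, (0 : L2 d) x.1 = 0 :=
        (Measure.quasiMeasurePreserving_fst (μ := (volume : Measure (Td d)))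
          (ν := (volume : Measure (Td d)))).ae hz1
      have hb : ∀ᵐ x : Td d × Td d, (0 : L2 d) x.2 = 0 :=
        (Measure.quasiMeasurePreserving_snd (μ := (volume : Measure (Td d)))
          (ν := (volume : Measure (Td d)))).ae hz1
      filter_upwards [h2, hz2, ha, hb] with x h2 h3 h4 h5
      rw [h3, h4, h5] at h2
      have hne := sub_ne_zero_of_band w₂ hw₂ K z hz x.1 x.2
      simpa [hne] using h2
    · refine Hkk_ext ?_ ?_
      · rw [(hT g).1, g0, g1]
        have h0 := ham0 hH z f
        rw [hr, p0_zero] at h0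
        linear_combination -h0
      · apply Lp.ext
        have hz1 : ∀ᵐ x : Td d, (0 : L2 d) x = 0 := Lp.coeFn_zero _ _ _
        have hz2 : ∀ᵐ x ∂((volume : Measure (Td d)).prod volume), (0 : L2two d) x = 0 :=
          Lp.coeFn_zero _ _ _
        have h1 := ham_reduced hH hv₁ hw₂ hz f
        rw [hr, p1_zero, p2_zero] at h1
        filter_upwards [(hT g).2, h1, hz1, Measure.ae_ae_of_ae_prod hz2] with p a1 a2 a3 a4
        have a5 : ∫ t, (v₁ t : ℂ) / ((w₂ K p t : ℂ) - z) * (0 : L2two d) (p, t) = 0 := by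
          apply integral_eq_zero_of_ae
          filter_upwards [a4] with t ht
          rw [ht]; simp
        rw [a1, hI, g0, g1]
        rw [a3, a5] at a2
        have := hD p
        generalize (∫ t, (v₁ t : ℂ) / ((w₂ K p t : ℂ) - z) * p1 f t) = I at *
        field_simp
        linear_combination 2 * a2
  · rintro ⟨g, hg0, hg⟩
    obtain ⟨f, f0, f1, f2⟩ := exists_lift hH hv₁ hw₂ hsym hz (pk1 g) (pk2 g)
    refine ⟨f, ?_, ?_⟩
    · rintro rfl
      apply hg0
      exact Hkk_ext f0.symm f1.symm
    · rw [← sub_eq_zero]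
      refine H3_ext ?_ ?_ f2
      · rw [ham0 hH, p0_zero, f0, f1]
        have := (hT g).1
        rw [hg] at this
        linear_combination -this
      · rw [p1_zero, Lp.eq_zero_iff_ae_eq_zero]
        have hz2 : ∀ᵐ x ∂((volume : Measure (Td d)).prod volume), (0 : L2two d) x = 0 :=
          Lp.coeFn_zero _ _ _
        have h1 := ham_reduced hH hv₁ hw₂ hz f
        rw [f2, f0, f1] at h1
        have h2 := (hT g).2
        rw [hg] at h2
        filter_upwards [h2, h1, Measure.ae_ae_of_ae_prod hz2] with p a1 a2 a4
        have a5 : ∫ t, (v₁ t : ℂ) / ((w₂ K p t : ℂ) - z) * (0 : L2two d) (p, t) = 0 := by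
          apply integral_eq_zero_of_ae
          filter_upwards [a4] with t ht
          rw [ht]; simp
        rw [a5, sub_zero] at a2
        rw [a2]
        rw [hI] at a1
        have := hD p
        rw [a1]
        simp only [Pi.zero_apply]
        generalize (∫ t, (v₁ t : ℂ) / ((w₂ K p t : ℂ) - z) * pk2 g t) = I at *
        field_simp
        ring
end ham
end

open MeasureTheory Complex Filter Topology Set

noncomputable section
variable {d : ℕ}

theorem not_fd_of_orthogonal {H' E : Type*} [NormedAddCommGroup H'] [InnerProductSpace ℂ H']
    [NormedAddCommGroup E] [InnerProductSpace ℂ E] (φ : H' →ₗ[ℂ] E) (S : Submodule ℂ H')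
    (f : ℕ → H') (hf : ∀ n, f n ∈ S) (h0 : ∀ n, φ (f n) ≠ 0)
    (ho : ∀ i j, i ≠ j → inner ℂ (φ (f i)) (φ (f j)) = 0) : ¬ FiniteDimensional ℂ S := by
  intro hfd
  have h1 : LinearIndependent ℂ (fun n => φ (f n)) :=
    linearIndependent_of_ne_zero_of_inner_eq_zero h0 ho
  have h2 : LinearIndependent ℂ (fun n : ℕ => (⟨f n, hf n⟩ : S)) := by
    apply LinearIndependent.of_comp (φ ∘ₗ S.subtype)
    exact h1
  have := h2.finite_of_isNoetherian
  exact not_finite ℕ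

theorem td_null (hd : 1 ≤ d) (k : Td d) : (volume : Measure (Td d)) {k} = 0 := by
  have : NullSingletonClass (volume : Measure (AddCircle (2 * Real.pi))) := by
    refine ⟨fun x => ?_⟩
    have h := AddCircle.volume_closedBall (T := 2 * Real.pi) (x := x) 0
    rw [Metric.closedBall_zero] at h
    rw [h]
    simp [Real.pi_pos.le]
  have : NullSingletonClass (volume : Measure (Td d)) :=
    Measure.pi_nullSingletonClass (⟨0, hd⟩ : Fin d)
  exact measure_singleton k

theorem exists_small (hd : 1 ≤ d) (k l : Td d) (ε : ℝ) (hε : 0 < ε) :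
    ∃ O : Set (Td d), IsOpen O ∧ k ∈ O ∧ l ∈ O ∧ √(volume O).toReal < ε := by
  have h : (volume : Measure (Td d)) {k, l} < ENNReal.ofReal (ε ^ 2) := by
    have : (volume : Measure (Td d)) {k, l} = 0 :=
      measure_union_null (td_null hd k) (td_null hd l)
    rw [this]; simp; positivity
  obtain ⟨O, hO, ho, hv⟩ := Set.exists_isOpen_lt_of_lt _ _ h
  refine ⟨O, ho, hO (by simp), hO (by simp), ?_⟩
  rw [Real.sqrt_lt' hε]
  exact ENNReal.toReal_lt_of_lt_ofReal hv

theorem td_infinite (hd : 1 ≤ d) (B : Set (Td d)) (hB : IsOpen B) (hne : B.Nonempty) :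
    B.Infinite := by
  intro hfin
  have h1 : (volume : Measure (Td d)) B = 0 := by
    have : NullSingletonClass (volume : Measure (Td d)) := ⟨td_null hd⟩
    exact hfin.measure_zero _
  exact (hB.measure_pos volume hne).ne' h1

theorem exists_disjoint_opens (hd : 1 ≤ d) (B : Set (Td d)) (hB : IsOpen B) (hne : B.Nonempty) :
    ∃ U : ℕ → Set (Td d), (∀ n, (U n).Nonempty) ∧ (∀ n, IsOpen (U n)) ∧ (∀ n, U n ⊆ B) ∧
      ∀ i j, i ≠ j → Disjoint (U i) (U j) := by
  have : Infinite B := (td_infinite hd B hB hne).to_subtype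
  obtain ⟨U, h1, h2, h3⟩ := exists_seq_infinite_isOpen_pairwise_disjoint B
  refine ⟨fun n => Subtype.val '' U n, fun n => (h1 n).nonempty.image _,
    fun n => hB.isOpenMap_subtype_val _ (h2 n), ?_, ?_⟩
  · rintro n _ ⟨x, _, rfl⟩; exact x.2
  · intro i j hij
    exact (Set.disjoint_image_iff Subtype.val_injective).2 (h3 hij)

theorem indicator_inner {X : Type*} [MeasurableSpace X] {μ : Measure X} {f g : Lp ℂ 2 μ}
    {A B : Set X} (hA : f =ᵐ[μ] A.indicator (fun _ => 1)) (hB : g =ᵐ[μ] B.indicator (fun _ => 1))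
    (h : Disjoint A B) : inner ℂ f g = 0 := by
  rw [L2.inner_def]
  apply integral_eq_zero_of_ae
  filter_upwards [hA, hB] with x h1 h2
  rw [h1, h2]
  by_cases hx : x ∈ A
  · have : x ∉ B := Set.disjoint_left.1 h hx
    simp [this]
  · simp [hx]

theorem indicator_ne_zero {X : Type*} [MeasurableSpace X] {μ : Measure X} {f : Lp ℂ 2 μ}
    {A : Set X} (hA : f =ᵐ[μ] A.indicator (fun _ => 1)) (h : μ A ≠ 0) : f ≠ 0 := by
  rintro rfl
  apply h
  have h0 := Lp.coeFn_zero ℂ 2 μ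
  have : ∀ᵐ x ∂μ, x ∉ A := by
    filter_upwards [hA, h0] with x h1 h2 hx
    rw [h2] at h1
    simp [hx] at h1
  simpa [ae_iff] using this

def p1L : H3 d →ₗ[ℂ] L2 d where
  toFun := p1
  map_add' := p1_add
  map_smul' := p1_smul

def p2L : H3 d →ₗ[ℂ] L2two d where
  toFun := p2
  map_add' := p2_add
  map_smul' := p2_smul

def suppSub {X : Type*} [MeasurableSpace X] (μ : Measure X) (A : Set X) :
    Submodule ℂ (Lp ℂ 2 μ) where
  carrier := {f | ∀ᵐ x ∂μ, x ∉ A → f x = 0}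
  zero_mem' := by
    filter_upwards [Lp.coeFn_zero ℂ 2 μ] with x hx _
    exact hx
  add_mem' := by
    intro f g hf hg
    simp only [mem_ofPred_eq] at *
    filter_upwards [Lp.coeFn_add f g, hf, hg] with x h1 h2 h3 hx
    rw [h1, Pi.add_apply, h2 hx, h3 hx, add_zero]
  smul_mem' := by
    intro c f hf
    simp only [mem_ofPred_eq] at *
    filter_upwards [Lp.coeFn_smul c f, hf] with x h1 h2 hx
    rw [h1, Pi.smul_apply, h2 hx, smul_zero]

def p0L : H3 d →ₗ[ℂ] ℂ where
  toFun := p0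
  map_add' := p0_add
  map_smul' := p0_smul

theorem norm_le_of_ae_add {X : Type*} [MeasurableSpace X] (μ : Measure X) [IsFiniteMeasure μ] :
    ∃ V : ℝ, 0 ≤ V ∧ ∀ (f g : Lp ℂ 2 μ) (a c : ℝ), 0 ≤ a → 0 ≤ c →
      (∀ᵐ x ∂μ, ‖f x‖ ≤ a * ‖g x‖ + c) → ‖f‖ ≤ a * ‖g‖ + c * V := by
  have h1 : MemLp (fun _ : X => (1 : ℝ)) 2 μ := memLp_const 1
  refine ⟨‖h1.toLp‖, norm_nonneg _, fun f g a c ha hc h => ?_⟩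
  have hN := (Lp.memLp g).norm
  have hN' : ‖hN.toLp‖ ≤ ‖g‖ := by
    apply Lp.norm_le_norm_of_ae_le
    filter_upwards [hN.coeFn_toLp] with x hx
    rw [hx]; simp
  calc ‖f‖ ≤ ‖a • hN.toLp + c • h1.toLp‖ := by
        apply Lp.norm_le_norm_of_ae_le
        filter_upwards [h, hN.coeFn_toLp, h1.coeFn_toLp, Lp.coeFn_add (a • hN.toLp) (c • h1.toLp),
          Lp.coeFn_smul a hN.toLp, Lp.coeFn_smul c h1.toLp] with x e1 e2 e3 e4 e5 e6
        rw [e4, Pi.add_apply, e5, e6, Pi.smul_apply, Pi.smul_apply, e2, e3]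
        simp only [smul_eq_mul, mul_one]
        exact e1.trans (le_abs_self _)
    _ ≤ ‖a • hN.toLp‖ + ‖c • h1.toLp‖ := norm_add_le _ _
    _ = a * ‖hN.toLp‖ + c * ‖h1.toLp‖ := by
        rw [norm_smul, norm_smul, Real.norm_of_nonneg ha, Real.norm_of_nonneg hc]
    _ ≤ _ := by gcongr

theorem H3_norm_le (f : H3 d) : ‖f‖ ≤ ‖p0 f‖ + ‖p1 f‖ + ‖p2 f‖ := by
  apply le_of_sq_le_sq _ (by positivity)
  rw [H3_norm_sq f]
  nlinarith [mul_nonneg (norm_nonneg (p0 f)) (norm_nonneg (p1 f)),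
    mul_nonneg (norm_nonneg (p0 f)) (norm_nonneg (p2 f)),
    mul_nonneg (norm_nonneg (p1 f)) (norm_nonneg (p2 f))]

section ham
variable {w₀ v₀ v₁ : Td d → ℝ} {w₁ : Td d → Td d → ℝ} {w₂ : Td d → Td d → Td d → ℝ}
  {K : Td d} {H : H3 d →L[ℂ] H3 d}

theorem lam_subset (hd : 1 ≤ d) (hH : IsHamiltonian w₀ v₀ v₁ w₁ w₂ K H) (hv₀ : Continuous v₀)
    (hv₁ : Continuous v₁)
    (hw₁ : Continuous fun x : Td d × Td d => w₁ x.1 x.2)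
    (hw₂ : Continuous fun x : Td d × Td d × Td d => w₂ x.1 x.2.1 x.2.2)
    (hsym : ∀ K p q : Td d, w₂ K p q = w₂ K q p) {z : ℂ}
    (hz : z ∉ bigBand w₂ K) (k : Td d) (hk : Delta v₁ w₁ w₂ K k z = 0) : z ∈ essSpec H := by
  apply mem_essSpec_of_subspaces
  intro ε hε
  obtain ⟨V, hV, hVb⟩ := norm_le_of_ae_add (volume : Measure (Td d))
  have hkc := continuous_ker hv₁ hw₂ hz
  obtain ⟨Ck, hCk, hCkb⟩ := exists_norm_bound _ hkc
  obtain ⟨C0, hC0, hC0b⟩ := exists_norm_bound _ (Complex.continuous_ofReal.comp hv₀)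
  obtain ⟨C1, hC1, hC1b⟩ := exists_norm_bound _ (Complex.continuous_ofReal.comp hv₁)
  set M : ℝ := C0 + C1 * Ck * V with hM
  have hM0 : 0 ≤ M := by positivity
  obtain ⟨O, hO, hkO, -, hvol⟩ := exists_small hd k k (ε / (2 * (M + 1))) (by positivity)
  have hDc := continuous_Delta hv₁ hw₁ hw₂ hz
  set B : Set (Td d) := O ∩ {p | ‖Delta v₁ w₁ w₂ K p z‖ < ε / 2} with hB
  have hBo : IsOpen B := hO.inter (isOpen_lt hDc.norm continuous_const)
  have hBne : B.Nonempty := ⟨k, hkO, by simp [hk, hε]⟩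
  have hBvol : √(volume B).toReal ≤ ε / (2 * (M + 1)) := by
    refine le_trans (Real.sqrt_le_sqrt ?_) hvol.le
    exact ENNReal.toReal_mono (measure_ne_top _ _) (measure_mono inter_subset_left)
  let S : Submodule ℂ (H3 d) := LinearMap.ker (p0L (d := d)) ⊓
    (suppSub volume B).comap p1L ⊓
    LinearMap.ker (p2L ∘ₗ ((H - z • ContinuousLinearMap.id ℂ (H3 d) : H3 d →L[ℂ] H3 d) :
      H3 d →ₗ[ℂ] H3 d))
  have hS : ∀ f, f ∈ S ↔ (p0 f = 0 ∧ (∀ᵐ t, t ∉ B → p1 f t = 0)) ∧ p2 (H f - z • f) = 0 :=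
    fun f => Iff.rfl
  refine ⟨S, ?_, ?_⟩
  · obtain ⟨U, U1, U2, U3, U4⟩ := exists_disjoint_opens hd B hBo hBne
    have hmem : ∀ n, MemLp ((U n).indicator (fun _ => (1 : ℂ))) 2 (volume : Measure (Td d)) :=
      fun n => (memLp_const 1).indicator (U2 n).measurableSet
    choose f f0 f1 f2 using fun n => exists_lift hH hv₁ hw₂ hsym hz 0 ((hmem n).toLp)
    have hf : ∀ n, p1 (f n) =ᵐ[volume] (U n).indicator (fun _ => (1 : ℂ)) := by
      intro n
      rw [f1 n]
      exact (hmem n).coeFn_toLp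
    refine not_fd_of_orthogonal p1L S f ?_ ?_ ?_
    · intro n
      rw [hS]
      refine ⟨⟨f0 n, ?_⟩, f2 n⟩
      filter_upwards [hf n] with t ht htB
      rw [ht]
      exact indicator_of_notMem (fun h => htB (U3 n h)) _
    · intro n
      exact indicator_ne_zero (hf n) ((U2 n).measure_pos volume (U1 n)).ne'
    · intro i j hij
      exact indicator_inner (hf i) (hf j) (U4 i j hij)
  · intro f hf
    rw [hS] at hf
    obtain ⟨⟨h0, h1⟩, h2⟩ := hf
    have n1 := norm_p1_le f
    set s := √(volume B).toReal with hs
    have hs0 : 0 ≤ s := Real.sqrt_nonneg _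
    have r0 : ‖p0 (H f - z • f)‖ ≤ C0 * s * ‖p1 f‖ := by
      rw [ham0 hH, h0, mul_zero, zero_add]
      exact functional_bound (p1 f) _ C0 hC0 hC0b B hBo.measurableSet h1
    have r1 : ‖p1 (H f - z • f)‖ ≤ ε / 2 * ‖p1 f‖ + (C1 * (Ck * s * ‖p1 f‖)) * V := by
      apply hVb _ _ _ _ (by positivity) (by positivity)
      have hz2 : ∀ᵐ x ∂((volume : Measure (Td d)).prod volume), (0 : L2two d) x = 0 :=
          Lp.coeFn_zero _ _ _
      have hr := ham_reduced hH hv₁ hw₂ hz f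
      rw [h2, h0] at hr
      filter_upwards [hr, h1, Measure.ae_ae_of_ae_prod hz2] with p a1 a2 a4
      have a5 : ∫ t, (v₁ t : ℂ) / ((w₂ K p t : ℂ) - z) * (0 : L2two d) (p, t) = 0 := by
        apply integral_eq_zero_of_ae
        filter_upwards [a4] with t ht
        rw [ht]; simp
      rw [a5, sub_zero, mul_zero, zero_add] at a1
      rw [a1]
      have b1 : ‖Delta v₁ w₁ w₂ K p z * p1 f p‖ ≤ ε / 2 * ‖p1 f p‖ := by
        rw [norm_mul]
        by_cases hp : p ∈ B
        · gcongr; exact hp.2.le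
        · rw [a2 hp]; simp
      have b2 := functional_bound (p1 f) (fun t => (v₁ t : ℂ) / ((w₂ K p t : ℂ) - z)) Ck hCk
        (fun t => hCkb (p, t)) B hBo.measurableSet h1
      have b3 : ‖(v₁ p : ℂ) / 2‖ ≤ C1 := by
        rw [norm_div]
        have := hC1b p
        simp only [Function.comp] at this
        have h3 : ‖(2 : ℂ)‖ = 2 := by simp
        rw [h3]
        linarith [norm_nonneg (v₁ p : ℂ)]
      refine (norm_sub_le _ _).trans (add_le_add b1 ?_)
      rw [norm_mul]
      exact mul_le_mul b3 b2 (norm_nonneg _) hC1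
    have r2 : ‖p2 (H f - z • f)‖ = 0 := by rw [h2, norm_zero]
    have hsM : s * M ≤ ε / 2 := by
      have : ε / (2 * (M + 1)) * (M + 1) = ε / 2 := by field_simp
      rw [← this]
      exact mul_le_mul hBvol (by linarith) hM0 (by positivity)
    calc ‖H f - z • f‖ ≤ _ := H3_norm_le _
      _ ≤ C0 * s * ‖p1 f‖ + (ε / 2 * ‖p1 f‖ + (C1 * (Ck * s * ‖p1 f‖)) * V) + 0 := by
          gcongr; exact r2.le
      _ = (s * M + ε / 2) * ‖p1 f‖ := by rw [hM]; ring
      _ ≤ ε * ‖f‖ := mul_le_mul (by linarith) n1 (norm_nonneg _) hε.le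

theorem exists_disjoint_box (hd : 1 ≤ d) (W : Set (Td d × Td d)) (hW : IsOpen W)
    (hne : W.Nonempty) : ∃ A B : Set (Td d), IsOpen A ∧ IsOpen B ∧ A.Nonempty ∧ B.Nonempty ∧
      A ×ˢ B ⊆ W ∧ Disjoint A B := by
  obtain ⟨⟨a, b⟩, hab⟩ := hne
  obtain ⟨A, B, hA, hB, ha, hb, hAB⟩ := isOpen_prod_iff.1 hW a b hab
  obtain ⟨c, hc, hcb⟩ := (td_infinite hd A hA ⟨a, ha⟩).exists_notMem_finset {b}
  have hcb : c ≠ b := by simpa using hcb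
  obtain ⟨X, Y, hX, hY, hcX, hbY, hd⟩ := t2_separation hcb
  exact ⟨A ∩ X, B ∩ Y, hA.inter hX, hB.inter hY, ⟨c, hc, hcX⟩, ⟨b, hb, hbY⟩,
    (prod_mono inter_subset_left inter_subset_left).trans hAB,
    hd.mono inter_subset_right inter_subset_right⟩

theorem band_subset (hd : 1 ≤ d) (hH : IsHamiltonian w₀ v₀ v₁ w₁ w₂ K H)
    (hv₁ : Continuous v₁)
    (hw₂ : Continuous fun x : Td d × Td d × Td d => w₂ x.1 x.2.1 x.2.2)
    (hsym : ∀ K p q : Td d, w₂ K p q = w₂ K q p) {z : ℂ}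
    (hz : z ∈ bigBand w₂ K) : z ∈ essSpec H := by
  have hc : Continuous fun x : Td d × Td d => w₂ K x.1 x.2 :=
    hw₂.comp (continuous_const.prodMk continuous_id)
  obtain ⟨l, ⟨hl1, hl2⟩, rfl⟩ := hz
  obtain ⟨⟨a, b⟩, hab⟩ : ∃ x : Td d × Td d, w₂ K x.1 x.2 = l := by
    obtain ⟨x, hx⟩ := (isCompact_range hc).sInf_mem (range_nonempty _)
    obtain ⟨y, hy⟩ := (isCompact_range hc).sSup_mem (range_nonempty _)
    apply mem_range_of_exists_le_of_exists_ge hc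
    · exact ⟨x, by simp only at hx; rw [hx]; exact hl1⟩
    · exact ⟨y, by simp only at hy; rw [hy]; exact hl2⟩
  apply mem_essSpec_of_subspaces
  intro ε hε
  obtain ⟨C1, hC1, hC1b⟩ := exists_norm_bound _ (Complex.continuous_ofReal.comp hv₁)
  obtain ⟨O, hO, haO, hbO, hvol⟩ := exists_small hd a b (ε / (2 * (C1 + 1))) (by positivity)
  have hwc := continuous_w2K hw₂ K
  set W : Set (Td d × Td d) := (O ×ˢ O) ∩ {x | ‖(w₂ K x.1 x.2 : ℂ) - (l : ℂ)‖ < ε / 2} with hW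
  have hWo : IsOpen W :=
    (hO.prod hO).inter (isOpen_lt (hwc.sub continuous_const).norm continuous_const)
  have hWne : W.Nonempty := by
    refine ⟨(a, b), ⟨haO, hbO⟩, ?_⟩
    simp only at hab
    simp [hab, hε]
  have hWs : ∀ p q, (p, q) ∈ W → (q, p) ∈ W := by
    rintro p q ⟨⟨h1, h2⟩, h3⟩
    refine ⟨⟨h2, h1⟩, ?_⟩
    simp only [mem_ofPred_eq] at h3 ⊢
    rwa [hsym K q p]
  let S : Submodule ℂ (H3 d) := LinearMap.ker (p0L (d := d)) ⊓ LinearMap.ker (p1L (d := d)) ⊓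
    (suppSub volume W).comap p2L
  have hS : ∀ f, f ∈ S ↔ (p0 f = 0 ∧ p1 f = 0) ∧ (∀ᵐ x, x ∉ W → p2 f x = 0) :=
    fun f => Iff.rfl
  refine ⟨S, ?_, ?_⟩
  · obtain ⟨A, B, hA, hB, hAne, hBne, hAB, hdis⟩ := exists_disjoint_box hd W hWo hWne
    obtain ⟨U, U1, U2, U3, U4⟩ := exists_disjoint_opens hd A hA hAne
    set Q : ℕ → Set (Td d × Td d) := fun n => (U n ×ˢ B) ∪ (B ×ˢ U n) with hQ
    have hQo : ∀ n, IsOpen (Q n) := fun n => ((U2 n).prod hB).union (hB.prod (U2 n))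
    have hQW : ∀ n, Q n ⊆ W := by
      rintro n ⟨p, q⟩ (⟨h1, h2⟩ | ⟨h1, h2⟩)
      · exact hAB ⟨U3 n h1, h2⟩
      · exact hWs _ _ (hAB ⟨U3 n h2, h1⟩)
    have hQne : ∀ n, (Q n).Nonempty := fun n => ((U1 n).prod hBne).inl
    have hQd : ∀ i j, i ≠ j → Disjoint (Q i) (Q j) := by
      intro i j hij
      rw [Set.disjoint_left]
      have hd1 := Set.disjoint_left.1 (U4 i j hij)
      have hd2 := Set.disjoint_left.1 hdis
      rintro ⟨p, q⟩ (⟨h1, h2⟩ | ⟨h1, h2⟩) (⟨h3, h4⟩ | ⟨h3, h4⟩)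
      · exact hd1 h1 h3
      · exact hd2 (U3 i h1) h3
      · exact hd2 (U3 j h3) h1
      · exact hd1 h2 h4
    have hQs : ∀ n x, (Q n).indicator (fun _ => (1 : ℂ)) x.swap =
        (Q n).indicator (fun _ => (1 : ℂ)) x := by
      rintro n ⟨p, q⟩
      have : (Prod.swap (p, q)) ∈ Q n ↔ (p, q) ∈ Q n := by
        simp only [hQ, mem_union, mem_prod, Prod.swap]
        tauto
      by_cases h : (p, q) ∈ Q n
      · rw [indicator_of_mem h, indicator_of_mem (this.2 h)]
      · rw [indicator_of_notMem h, indicator_of_notMem (fun h' => h (this.1 h'))]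
    have hmem : ∀ n, MemLp ((Q n).indicator (fun _ => (1 : ℂ))) 2
        (volume : Measure (Td d × Td d)) :=
      fun n => (memLp_const 1).indicator (hQo n).measurableSet
    choose f f0 f1 hf using fun n => exists_H3 (d := d) 0 0 _ (hmem n) (hQs n)
    refine not_fd_of_orthogonal p2L S f ?_ ?_ ?_
    · intro n
      rw [hS]
      refine ⟨⟨f0 n, f1 n⟩, ?_⟩
      filter_upwards [hf n] with t ht htB
      rw [ht]
      exact indicator_of_notMem (fun h => htB (hQW n h)) _
    · intro n
      exact indicator_ne_zero (hf n) ((hQo n).measure_pos volume (hQne n)).ne'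
    · intro i j hij
      exact indicator_inner (hf i) (hf j) (hQd i j hij)
  · intro f hf
    rw [hS] at hf
    obtain ⟨⟨h0, h1⟩, h2⟩ := hf
    have n2 := norm_p2_le f
    set s := √(volume O).toReal with hs
    have hs0 : 0 ≤ s := Real.sqrt_nonneg _
    have hz1 : ∀ᵐ x : Td d, (0 : L2 d) x = 0 := Lp.coeFn_zero _ _ _
    have r0 : ‖p0 (H f - (l : ℂ) • f)‖ = 0 := by
      rw [ham0 hH, h0, mul_zero, zero_add, h1, norm_eq_zero]
      apply integral_eq_zero_of_ae
      filter_upwards [hz1] with x hx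
      rw [hx]; simp
    have r1 : ‖p1 (H f - (l : ℂ) • f)‖ ≤ C1 * s * ‖p2 f‖ := by
      apply partial_bound (p2 f) _ (fun x => (v₁ x.2 : ℂ)) C1 hC1 (fun x => hC1b x.2) O
        hO.measurableSet
      · filter_upwards [h2] with x hx hxO
        exact hx fun h => hxO h.1.2
      · have := ham1 hH (l : ℂ) f
        rw [h0, h1] at this
        filter_upwards [this, hz1] with p e1 e2
        rw [e1, e2]; simp
    have r2 : ‖p2 (H f - (l : ℂ) • f)‖ ≤ ε / 2 * ‖p2 f‖ := by
      apply Lp.norm_le_mul_norm_of_ae_le_mul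
      have := ham2 hH (l : ℂ) f
      rw [h1] at this
      have ha : ∀ᵐ x : Td d × Td d, (0 : L2 d) x.1 = 0 :=
        (Measure.quasiMeasurePreserving_fst (μ := (volume : Measure (Td d)))
          (ν := (volume : Measure (Td d)))).ae hz1
      have hb : ∀ᵐ x : Td d × Td d, (0 : L2 d) x.2 = 0 :=
        (Measure.quasiMeasurePreserving_snd (μ := (volume : Measure (Td d)))
          (ν := (volume : Measure (Td d)))).ae hz1
      filter_upwards [this, ha, hb, h2] with x e1 e2 e3 e4
      rw [e1, e2, e3]
      simp only [mul_zero, add_zero, zero_div, zero_add]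
      rw [norm_mul]
      by_cases hx : x ∈ W
      · gcongr; exact hx.2.le
      · rw [e4 hx]; simp
    have hsM : s * C1 ≤ ε / 2 := by
      have : ε / (2 * (C1 + 1)) * (C1 + 1) = ε / 2 := by field_simp
      rw [← this]
      exact mul_le_mul hvol.le (by linarith) hC1 (by positivity)
    calc ‖H f - (l : ℂ) • f‖ ≤ _ := H3_norm_le _
      _ ≤ 0 + C1 * s * ‖p2 f‖ + ε / 2 * ‖p2 f‖ := by
          gcongr; exact r0.le
      _ = (s * C1 + ε / 2) * ‖p2 f‖ := by ring
      _ ≤ ε * ‖f‖ := mul_le_mul (by linarith) n2 (norm_nonneg _) hε.le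

end ham
end

/-- For every `K ∈ T^d`,
`σ_disc(H(K)) = σ(H(K)) \ σ_ess(H(K)) = {z ∉ Σ_K : I − T(K,z) is not injective}`; i.e. a point
`z` outside `Σ_K` belongs to `σ(H(K))` iff `T(K,z)` has eigenvalue `1`. -/
theorem discSpec_eq_T_fixed_points
    (d : ℕ) (hd : 1 ≤ d)
    (w₀ v₀ v₁ : Td d → ℝ) (w₁ : Td d → Td d → ℝ) (w₂ : Td d → Td d → Td d → ℝ)
    (hw₀ : Continuous w₀) (hv₀ : Continuous v₀) (hv₁ : Continuous v₁)
    (hw₁ : Continuous fun x : Td d × Td d => w₁ x.1 x.2)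
    (hw₂ : Continuous fun x : Td d × Td d × Td d => w₂ x.1 x.2.1 x.2.2)
    (hsym : ∀ K p q : Td d, w₂ K p q = w₂ K q p)
    (K : Td d)
    (H : H3 d →L[ℂ] H3 d) (hH : IsHamiltonian w₀ v₀ v₁ w₁ w₂ K H)
    (T : ℂ → Hkk d →L[ℂ] Hkk d)
    (hT : ∀ z ∉ SigK v₁ w₁ w₂ K, IsTOp w₀ v₀ v₁ w₁ w₂ K z (T z)) :
    spectrum ℂ H \ essSpec H =
      {z : ℂ | z ∉ SigK v₁ w₁ w₂ K ∧ ∃ g : Hkk d, g ≠ 0 ∧ T z g = g} ∧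
    ∀ z ∉ SigK v₁ w₁ w₂ K, (z ∈ spectrum ℂ H ↔ ∃ g : Hkk d, g ≠ 0 ∧ T z g = g) := by
  have hsub : SigK v₁ w₁ w₂ K ⊆ essSpec H := by
    rintro z (hz | ⟨k, hk, hD⟩)
    · exact band_subset hd hH hv₁ hw₂ hsym hz
    · by_cases hz : z ∈ bigBand w₂ K
      · exact band_subset hd hH hv₁ hw₂ hsym hz
      · exact lam_subset hd hH hv₀ hv₁ hw₁ hw₂ hsym hz k hD
  have hout : ∀ z ∉ SigK v₁ w₁ w₂ K, z ∉ essSpec H ∧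
      (z ∈ spectrum ℂ H ↔ ∃ g : Hkk d, g ≠ 0 ∧ T z g = g) := by
    intro z hz
    have hz1 : z ∉ bigBand w₂ K := fun h => hz (Or.inl h)
    have hD : ∀ p, Delta v₁ w₁ w₂ K p z ≠ 0 := fun p hp =>
      hz (Or.inr ⟨p, fun h => hz1 (bandKk_subset w₂ hw₂ K p h), hp⟩)
    have hne := notMem_essSpec hH hv₀ hv₁ hw₁ hw₂ hz1 hD
    refine ⟨hne, ?_⟩
    rw [← eigen_iff hH hv₁ hw₂ hsym hz1 hD (hT z hz)]
    constructor
    · exact exists_eigenvector_of_selfAdjoint H (ham_selfAdjoint hH hv₀ hv₁ hw₁ hw₂) z hne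
    · rintro ⟨u, hu0, hu⟩ hunit
      obtain ⟨B, hB⟩ := hunit.exists_left_inv
      apply hu0
      have h1 : B ((algebraMap ℂ (H3 d →L[ℂ] H3 d) z - H) u) = u := by
        have := congrArg (fun A : H3 d →L[ℂ] H3 d => A u) hB
        simpa using this
      have h2 : (algebraMap ℂ (H3 d →L[ℂ] H3 d) z - H) u = 0 := by
        rw [Algebra.algebraMap_eq_smul_one]
        simp [hu]
      rw [← h1, h2, map_zero]
  refine ⟨?_, fun z hz => (hout z hz).2⟩
  ext z
  constructor
  · rintro ⟨h1, h2⟩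
    have hz : z ∉ SigK v₁ w₁ w₂ K := fun h => h2 (hsub h)
    exact ⟨hz, (hout z hz).2.1 h1⟩
  · rintro ⟨hz, hg⟩
    exact ⟨(hout z hz).2.2 hg, (hout z hz).1⟩
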